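/- There exists a positive constant C such that for all positive integers N, the number of positive integers n ≤ N for which there exists an integer x with n! + 1 = x^2 is at most C·N^(33/34). -/

import Mathlib

open scoped Nat Classical

namespace BR
open PowerSeries in
/-- square root series of `1 + 4 j X` -/
theorem exists_G (j : ℕ) : ∃ G : PowerSeries ℤ, G ^ 2 = 1 + C (4 * (j:ℤ)) * X ∧
    coeff 0 G = 1 ∧ ∀ m, |coeff m G| ≤ (4 * (j:ℤ)) ^ m := by
  let c0 : PowerSeries ℤ := PowerSeries.map (Nat.castRingHom ℤ) catalanSeries
  have h0 : c0 ^ 2 * X + 1 = c0 := by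
    have := congrArg (PowerSeries.map (Nat.castRingHom ℤ)) catalanSeries_sq_mul_X_add_one
    simpa [c0] using this
  let c : PowerSeries ℤ := rescale (-(j:ℤ)) c0
  have h1 : c ^ 2 * (C (-(j:ℤ)) * X) + 1 = c := by
    have := congrArg (rescale (-(j:ℤ))) h0
    simp only [map_add, map_mul, map_pow, map_one, rescale_X] at this
    exact this
  have hc : ∀ m, |coeff m c| ≤ (4 * (j:ℤ)) ^ m := by
    intro m
    simp only [c, c0, coeff_rescale, coeff_map, catalanSeries_coeff]
    rw [abs_mul, abs_pow, abs_neg, mul_pow, mul_comm]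
    simp only [Nat.abs_cast, eq_natCast]
    gcongr
    have : catalan m ≤ 4 ^ m := by
      rw [catalan_eq_centralBinom_div]
      refine (Nat.div_le_self _ _).trans ?_
      rw [Nat.centralBinom]
      calc (2*m).choose m ≤ 2 ^ (2*m) := Nat.choose_le_two_pow _ _
        _ = 4 ^ m := by rw [pow_mul]; norm_num
    exact_mod_cast this
  refine ⟨1 + C (2 * (j:ℤ)) * (X * c), ?_, ?_, ?_⟩
  · have e2 : (C (2 * (j:ℤ)) : PowerSeries ℤ) = 2 * C (j:ℤ) := by simp
    have e4 : (C (4 * (j:ℤ)) : PowerSeries ℤ) = 4 * C (j:ℤ) := by simp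
    rw [map_neg] at h1
    rw [e2, e4]
    linear_combination (-4 * C (j:ℤ) * X) * h1
  · simp
  · intro m
    cases m with
    | zero => simp
    | succ m =>
      rw [map_add, coeff_C_mul, coeff_succ_X_mul, coeff_one, if_neg (by omega), zero_add, abs_mul,
        pow_succ, mul_comm]
      have : |2 * (j:ℤ)| ≤ 4 * (j:ℤ) := by
        rw [abs_of_nonneg (by positivity)]; linarith [Int.natCast_nonneg j]
      exact mul_le_mul (hc m) this (abs_nonneg _) (by positivity)

open PowerSeries in
theorem prod_bound (a : ℕ) (G : ℕ → PowerSeries ℤ) (s : Finset ℕ)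
    (hG : ∀ j ∈ s, ∀ m, |coeff m (G j)| ≤ (a:ℤ) ^ m) :
    ∀ m, |coeff m (∏ j ∈ s, G j)| ≤ ((s.card:ℤ) * a) ^ m := by
  induction s using Finset.induction_on with
  | empty =>
    intro m
    cases m with
    | zero => simp
    | succ m => simp [coeff_one]
  | insert j s hj ih =>
    intro m
    rw [Finset.prod_insert hj, Finset.card_insert_of_notMem hj, mul_comm, coeff_mul]
    have ih' := ih (fun i hi => hG i (Finset.mem_insert_of_mem hi))
    have hj' := hG j (Finset.mem_insert_self _ _)
    calc |∑ p ∈ Finset.HasAntidiagonal.antidiagonal m, coeff p.1 (∏ j ∈ s, G j) * coeff p.2 (G j)|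
        ≤ ∑ p ∈ Finset.HasAntidiagonal.antidiagonal m, |coeff p.1 (∏ j ∈ s, G j) * coeff p.2 (G j)| :=
          Finset.abs_sum_le_sum_abs _ _
      _ ≤ ∑ p ∈ Finset.HasAntidiagonal.antidiagonal m, (((s.card:ℤ) * a) ^ p.1 * (a:ℤ) ^ p.2 * (m.choose p.1)) := by
          refine Finset.sum_le_sum fun p hp => ?_
          rw [abs_mul]
          have h1 := mul_le_mul (ih' p.1) (hj' p.2) (abs_nonneg _) (by positivity)
          refine h1.trans ?_
          have : 1 ≤ m.choose p.1 := Nat.choose_pos (by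
            have := Finset.HasAntidiagonal.mem_antidiagonal.mp hp; omega)
          exact le_mul_of_one_le_right (by positivity) (by exact_mod_cast this)
      _ = ((s.card:ℤ) * a + a) ^ m := by
          rw [Commute.add_pow' (Commute.all _ _)]
          refine Finset.sum_congr rfl fun p hp => ?_
          rw [nsmul_eq_mul]; ring
      _ = _ := by push_cast; ring

open PowerSeries in
theorem exists_F (h : ℕ) : ∃ F : PowerSeries ℤ,
    F ^ 2 = ((∏ j ∈ Finset.Icc 1 h, (1 + Polynomial.C (4 * (j:ℤ)) * Polynomial.X) : Polynomial ℤ) : PowerSeries ℤ) ∧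
    coeff 0 F = 1 ∧ ∀ m, |coeff m F| ≤ (4 * (h:ℤ) ^ 2) ^ m := by
  choose G hG1 hG0 hG2 using exists_G
  refine ⟨∏ j ∈ Finset.Icc 1 h, G j, ?_, ?_, ?_⟩
  · rw [← Finset.prod_pow]
    simp only [hG1]
    rw [← Polynomial.coeToPowerSeries.ringHom_apply, map_prod]
    refine Finset.prod_congr rfl fun j _ => ?_
    rw [Polynomial.coeToPowerSeries.ringHom_apply, Polynomial.coe_add, Polynomial.coe_mul,
      Polynomial.coe_C, Polynomial.coe_X, Polynomial.coe_one]
  · rw [coeff_zero_eq_constantCoeff, map_prod]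
    exact Finset.prod_eq_one fun j _ => by simpa using hG0 j
  · intro m
    have := prod_bound (4 * h) G (Finset.Icc 1 h) (fun j hj m => (hG2 j m).trans (by
      have : j ≤ h := (Finset.mem_Icc.mp hj).2
      push_cast
      gcongr)) m
    refine this.trans (le_of_eq ?_)
    simp
    ring

open Polynomial in
/-- the differential operator -/
noncomputable def nab {K : Type*} [CommRing K] (Q R : K[X]) (q : K[X]) : K[X] :=
  Q * derivative q + q * R

open Polynomial in
noncomputable def wv {K : Type*} [CommRing K] (Q R : K[X]) (q : K[X]) (j : ℕ) : K[X] :=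
  (nab Q R)^[j] q

open Polynomial in
theorem wv_succ {K : Type*} [CommRing K] (Q R : K[X]) (q : K[X]) (j : ℕ) :
    wv Q R q (j+1) = Q * derivative (wv Q R q j) + wv Q R q j * R := by
  rw [wv, Function.iterate_succ_apply']; rfl

open Polynomial in
theorem wv_zero {K : Type*} [CommRing K] (Q R : K[X]) (q : K[X]) :
    wv Q R q 0 = q := rfl

open Polynomial in
/-- Divisibility from the derivative. -/
theorem dvd_of_derivative (s : ℝ) (W : ℝ[X]) (k : ℕ) (h0 : W.eval s = 0)
    (h : (X - C s) ^ k ∣ derivative W) : (X - C s) ^ (k+1) ∣ W := by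
  by_cases hW : W = 0
  · simp [hW]
  have hroot : W.IsRoot s := h0
  by_cases hd : derivative W = 0
  · have := derivative_eq_zero.mp hd
    rw [eq_C_of_natDegree_eq_zero this] at hW h0
    simp at h0
    simp [h0] at hW
  have h1 : k ≤ (derivative W).rootMultiplicity s := (le_rootMultiplicity_iff hd).mpr h
  have h2 := derivative_rootMultiplicity_of_root hroot
  have h3 : 0 < W.rootMultiplicity s := (rootMultiplicity_pos hW).mpr hroot
  exact (le_rootMultiplicity_iff hW).mp (by omega)

open Polynomial in
theorem deriv_det {ι : Type*} [Fintype ι] [DecidableEq ι] (Q : ℝ[X]) (R q : ι → ℝ[X])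
    (idx : ι → ℕ) :
    Q * derivative (Matrix.det (Matrix.of fun a b => wv Q (R b) (q b) (idx a))) =
      ∑ c, Matrix.det (Matrix.of fun a b => wv Q (R b) (q b) (Function.update idx c (idx c + 1) a))
      - (∑ b, R b) * Matrix.det (Matrix.of fun a b => wv Q (R b) (q b) (idx a)) := by
  simp only [Matrix.det_apply', Matrix.of_apply]
  rw [derivative_sum, Finset.mul_sum, Finset.mul_sum, Finset.sum_comm, ← Finset.sum_sub_distrib]
  refine Finset.sum_congr rfl fun σ _ => ?_
  rw [derivative_mul, derivative_prod_finset]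
  have e0 : derivative ((Equiv.Perm.sign σ : ℤ) : ℝ[X]) = 0 := by simp
  rw [e0, zero_mul, zero_add, ← Finset.mul_sum, mul_left_comm, mul_left_comm (∑ b, R b),
    ← mul_sub]
  congr 1
  rw [Finset.mul_sum, Finset.sum_mul, 
    ← Equiv.sum_comp σ (fun c => ∏ k, wv Q (R k) (q k) (Function.update idx c (idx c + 1) (σ k))),
    ← Finset.sum_sub_distrib]
  refine Finset.sum_congr rfl fun i _ => ?_
  rw [← Finset.mul_prod_erase Finset.univ
      (fun k => wv Q (R k) (q k) (Function.update idx (σ i) (idx (σ i) + 1) (σ k))) (Finset.mem_univ i),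
    ← Finset.mul_prod_erase Finset.univ
      (fun k => wv Q (R k) (q k) (idx (σ k))) (Finset.mem_univ i)]
  have e1 : ∏ k ∈ Finset.univ.erase i,
      wv Q (R k) (q k) (Function.update idx (σ i) (idx (σ i) + 1) (σ k)) =
      ∏ k ∈ Finset.univ.erase i, wv Q (R k) (q k) (idx (σ k)) := by
    refine Finset.prod_congr rfl fun k hk => ?_
    rw [Function.update_of_ne]
    intro h
    exact (Finset.mem_erase.mp hk).1 (σ.injective h)
  rw [e1, Function.update_self, wv_succ]
  ring

open Polynomial in
theorem det_mult {ι : Type*} [Fintype ι] [DecidableEq ι] (Q : ℝ[X]) (R q : ι → ℝ[X])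
    (s : ℝ) (hQ : Q.eval s ≠ 0) (v : ι → ℝ) (hv : v ≠ 0) (J : ℕ)
    (H : ∀ j ≤ J, ∑ i, (wv Q (R i) (q i) j).eval s * v i = 0) :
    ∀ k, ∀ idx : ι → ℕ, (∀ i, idx i + k ≤ J) →
      (X - C s) ^ (k+1) ∣ Matrix.det (Matrix.of fun a b => wv Q (R b) (q b) (idx a)) := by
  have base : ∀ idx : ι → ℕ, (∀ i, idx i ≤ J) →
      (Matrix.det (Matrix.of fun a b => wv Q (R b) (q b) (idx a))).eval s = 0 := by
    intro idx hidx
    rw [← coe_evalRingHom, RingHom.map_det]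
    refine Matrix.exists_mulVec_eq_zero_iff.mp ⟨v, hv, ?_⟩
    ext a
    simpa [Matrix.mulVec, dotProduct] using H (idx a) (hidx a)
  intro k
  induction k with
  | zero =>
    intro idx hidx
    rw [zero_add, pow_one, dvd_iff_isRoot]
    exact base idx (by simpa using hidx)
  | succ k ih =>
    intro idx hidx
    apply dvd_of_derivative
    · exact base idx (fun i => by have := hidx i; omega)
    have h1 := deriv_det Q R q idx
    have h2 : (X - C s) ^ (k+1) ∣
        Q * derivative (Matrix.det (Matrix.of fun a b => wv Q (R b) (q b) (idx a))) := by
      rw [h1]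
      apply dvd_sub
      · refine Finset.dvd_sum fun c _ => ih _ fun i => ?_
        have := hidx i
        have := hidx c
        by_cases hic : i = c
        · subst hic; simp; omega
        · rw [Function.update_of_ne hic]; omega
      · exact Dvd.dvd.mul_left (ih _ fun i => by have := hidx i; omega) _
    refine IsCoprime.dvd_of_dvd_mul_left ?_ h2
    apply IsCoprime.pow_left
    rw [(irreducible_X_sub_C s).coprime_iff_not_dvd, dvd_iff_isRoot]
    exact hQ

open Polynomial in
theorem dual_kernel {ι : Type*} [Fintype ι] [DecidableEq ι] (Q : ℝ[X]) (R q : ι → ℝ[X])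
    (hq : ∀ i, q i ≠ 0)
    (hsep : ∀ i i0, i ≠ i0 → ∀ y y0 : ℝ[X], y ≠ 0 → y0 ≠ 0 →
      Q * (y0 * derivative y - derivative y0 * y) ≠ (R i - R i0) * y * y0) :
    ∀ m : ℕ, ∀ y : ι → ℝ[X], (Finset.univ.filter fun i => y i ≠ 0).card ≤ m → 
      (∀ j < m, ∑ i, wv Q (R i) (q i) j * y i = 0) → y = 0 := by
  intro m
  induction m with
  | zero =>
    intro y hy _
    rw [Nat.le_zero, Finset.card_eq_zero, Finset.filter_eq_empty_iff] at hy
    ext1 i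
    simpa using hy (Finset.mem_univ i)
  | succ m ih =>
    intro y hy hk
    by_contra hne
    obtain ⟨i0, hi0⟩ : ∃ i0, y i0 ≠ 0 := by
      by_contra hcon
      push Not at hcon
      exact hne (funext hcon)
    let D : ι → ℝ[X] := fun i => Q * derivative (y i) - R i * y i
    let z : ι → ℝ[X] := fun i => y i0 * D i - D i0 * y i
    have hz : z = 0 := by
      apply ih
      · have : (Finset.univ.filter fun i => z i ≠ 0) ⊆ (Finset.univ.filter fun i => y i ≠ 0).erase i0 := by
          intro i hi
          rw [Finset.mem_erase, Finset.mem_filter]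
          rw [Finset.mem_filter] at hi
          refine ⟨?_, Finset.mem_univ _, ?_⟩
          · rintro rfl
            exact hi.2 (by simp only [z]; ring)
          · intro h0
            exact hi.2 (by simp [z, D, h0])
        have h2 := Finset.card_le_card this
        rw [Finset.card_erase_of_mem (by simp [hi0])] at h2
        omega
      · intro j hj
        have e1 := hk j (by omega)
        have e2 := hk (j+1) (by omega)
        have e3 : ∑ i, wv Q (R i) (q i) j * D i = 0 := by
          have := congrArg derivative e1
          rw [derivative_sum, derivative_zero] at this
          have h3 : Q * ∑ i, derivative (wv Q (R i) (q i) j * y i) =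
              ∑ i, wv Q (R i) (q i) (j+1) * y i + ∑ i, wv Q (R i) (q i) j * D i := by
            rw [Finset.mul_sum, ← Finset.sum_add_distrib]
            refine Finset.sum_congr rfl fun i _ => ?_
            rw [wv_succ, derivative_mul]
            simp only [D]; ring
          rw [this, e2] at h3
          simpa using h3.symm
        calc ∑ i, wv Q (R i) (q i) j * z i = y i0 * ∑ i, wv Q (R i) (q i) j * D i
              - D i0 * ∑ i, wv Q (R i) (q i) j * y i := by
              rw [Finset.mul_sum, Finset.mul_sum, ← Finset.sum_sub_distrib]
              refine Finset.sum_congr rfl fun i _ => ?_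
              simp only [z]; ring
          _ = 0 := by rw [e3, e1]; simp
    have hsupp : ∀ i, i ≠ i0 → y i = 0 := by
      intro i hi
      by_contra hyi
      refine hsep i i0 hi (y i) (y i0) hyi hi0 ?_
      have := congrFun hz i
      simp only [z, D, Pi.zero_apply] at this
      linear_combination this
    have := hk 0 (by omega)
    rw [Finset.sum_eq_single i0 (fun i _ hi => by rw [hsupp i hi, mul_zero]) (by simp), wv_zero] at this
    exact (mul_ne_zero (hq i0) hi0) this

open Polynomial in
theorem det_ne_zero {ι : Type*} [Fintype ι] [DecidableEq ι] (Q : ℝ[X]) (R q : ι → ℝ[X])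
    (hq : ∀ i, q i ≠ 0)
    (hsep : ∀ i i0, i ≠ i0 → ∀ y y0 : ℝ[X], y ≠ 0 → y0 ≠ 0 →
      Q * (y0 * derivative y - derivative y0 * y) ≠ (R i - R i0) * y * y0) :
    Matrix.det (Matrix.of fun a b => wv Q (R b) (q b) (Fintype.equivFin ι a)) ≠ 0 := by
  intro h
  obtain ⟨y, hy, hy0⟩ := Matrix.exists_mulVec_eq_zero_iff.mpr h
  refine hy (dual_kernel Q R q hq hsep (Fintype.card ι) y ?_ ?_)
  · exact (Finset.card_le_univ _)
  · intro j hj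
    have := congrFun hy0 ((Fintype.equivFin ι).symm ⟨j, hj⟩)
    simpa [Matrix.mulVec, dotProduct] using this

open Polynomial in
noncomputable def PiP (K : Type*) [CommRing K] (h : ℕ) : K[X] :=
  ∏ j ∈ Finset.Icc 1 h, (1 + C (4 * (j:K)) * X)

open Polynomial in
noncomputable def RP (K : Type*) [CommRing K] (h e : ℕ) : K[X] :=
  ∑ j ∈ Finset.Icc 1 e, C (2 * (j:K)) * ∏ l ∈ (Finset.Icc 1 h).erase j, (1 + C (4 * (l:K)) * X)

open Polynomial in
theorem PiP_map (h : ℕ) : (PiP ℤ h).map (Int.castRingHom ℝ) = PiP ℝ h := by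
  simp [PiP, Polynomial.map_prod]
  rfl

open Polynomial in
theorem RP_map (h e : ℕ) : (RP ℤ h e).map (Int.castRingHom ℝ) = RP ℝ h e := by
  simp [RP, Polynomial.map_prod, Polynomial.map_sum]
  rfl

open Polynomial in
theorem wv_map (Q R q : ℤ[X]) (j : ℕ) : (wv Q R q j).map (Int.castRingHom ℝ) =
    wv (Q.map (Int.castRingHom ℝ)) (R.map (Int.castRingHom ℝ)) (q.map (Int.castRingHom ℝ)) j := by
  induction j with
  | zero => rfl
  | succ j ih => rw [wv_succ, wv_succ, ← ih]; simp [derivative_map]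

open Polynomial in
theorem sep_aux (h e e0 : ℕ) (he : e ≤ h) (h0 : e0 < e) (y y0 : ℝ[X]) (hy : y ≠ 0) (hy0 : y0 ≠ 0) :
    PiP ℝ h * (y0 * derivative y - derivative y0 * y) ≠ (RP ℝ h e - RP ℝ h e0) * y * y0 := by
  intro heq
  have hepos : (0:ℝ) < e := by exact_mod_cast (by omega : 0 < e)
  set s : ℝ := -1 / (4 * e) with hs
  have hfe : 1 + (4 * (e:ℝ)) * s = 0 := by rw [hs]; field_simp; ring
  set E : ℝ[X] := ∏ l ∈ (Finset.Icc 1 h).erase e, (1 + C (4 * (l:ℝ)) * X) with hE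
  have hmem : e ∈ Finset.Icc 1 h := Finset.mem_Icc.mpr ⟨by omega, he⟩
  have hP : PiP ℝ h = C (4 * (e:ℝ)) * (X - C s) * E := by
    rw [PiP, ← Finset.mul_prod_erase _ _ hmem, ← hE]
    congr 1
    have : (1:ℝ[X]) = - (C (4 * (e:ℝ)) * C s) := by
      rw [← C_mul, ← C_neg, ← C_1]; congr 1; linarith
    rw [this]; ring
  have hEs : E.eval s ≠ 0 := by
    rw [hE, eval_prod, Finset.prod_ne_zero_iff]
    intro l hl
    have hle : l ≠ e := (Finset.mem_erase.mp hl).1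
    simp only [eval_add, eval_one, eval_mul, eval_C, eval_X]
    rw [hs]
    intro h
    field_simp at h
    apply hle
    have : (e:ℝ) = l := by linarith
    exact_mod_cast this.symm
  have hother : ∀ j ∈ Finset.Icc 1 e, j ≠ e →
      (∏ l ∈ (Finset.Icc 1 h).erase j, (1 + C (4 * (l:ℝ)) * X)).eval s = 0 := by
    intro j hj hje
    rw [eval_prod]
    refine Finset.prod_eq_zero (i := e) (Finset.mem_erase.mpr ⟨hje.symm, hmem⟩) ?_
    simpa using hfe
  have hR : (RP ℝ h e).eval s = 2 * e * E.eval s := by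
    rw [RP, eval_finsetSum, Finset.sum_eq_single e]
    · rw [eval_mul, eval_C]
    · intro j hj hje
      rw [eval_mul, hother j hj hje, mul_zero]
    · intro h; exact absurd (Finset.mem_Icc.mpr ⟨by omega, le_rfl⟩) h
  have hR0 : (RP ℝ h e0).eval s = 0 := by
    rw [RP, eval_finsetSum]
    refine Finset.sum_eq_zero fun j hj => ?_
    rw [Finset.mem_Icc] at hj
    rw [eval_mul, hother j (Finset.mem_Icc.mpr ⟨hj.1, by omega⟩) (by omega), mul_zero]
  obtain ⟨u, hu, hu'⟩ := exists_eq_pow_rootMultiplicity_mul_and_not_dvd y hy s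
  obtain ⟨v, hv, hv'⟩ := exists_eq_pow_rootMultiplicity_mul_and_not_dvd y0 hy0 s
  set a := y.rootMultiplicity s
  set b := y0.rootMultiplicity s
  have key : ∀ (a : ℕ) (u : ℝ[X]), (X - C s) * derivative ((X - C s) ^ a * u) =
      (X - C s) ^ a * (C (a:ℝ) * u + (X - C s) * derivative u) := by
    intro a u
    rw [derivative_mul, derivative_X_sub_C_pow]
    cases a with
    | zero => simp
    | succ a => rw [Nat.add_sub_cancel, pow_succ]; ring
  have h2 : (X - C s) ^ (a + b) * (C (4 * (e:ℝ)) * E * (v * (C (a:ℝ) * u + (X - C s) * derivative u)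
      - u * (C (b:ℝ) * v + (X - C s) * derivative v))) =
      (X - C s) ^ (a + b) * ((RP ℝ h e - RP ℝ h e0) * u * v) := by
    have k1 := key a u
    have k2 := key b v
    rw [← hu] at k1
    rw [← hv] at k2
    rw [hP] at heq
    calc _ = C (4 * (e:ℝ)) * E * (((X - C s) ^ b * v) * ((X - C s) ^ a * (C (a:ℝ) * u + (X - C s) * derivative u))
      - ((X - C s) ^ a * u) * ((X - C s) ^ b * (C (b:ℝ) * v + (X - C s) * derivative v))) := by rw [pow_add]; ring
      _ = C (4 * (e:ℝ)) * E * (y0 * ((X - C s) * derivative y) - y * ((X - C s) * derivative y0)) := by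
        rw [← hu, ← hv, k1, k2]
      _ = (RP ℝ h e - RP ℝ h e0) * y * y0 := by rw [← heq]; ring
      _ = (RP ℝ h e - RP ℝ h e0) * ((X - C s) ^ a * u) * ((X - C s) ^ b * v) := by rw [← hu, ← hv]
      _ = _ := by rw [pow_add]; ring
  have h3 := mul_left_cancel₀ (pow_ne_zero _ (X_sub_C_ne_zero s)) h2
  have h4 := congrArg (eval s) h3
  have hus : u.eval s ≠ 0 := fun h => hu' (dvd_iff_isRoot.mpr h)
  have hvs : v.eval s ≠ 0 := fun h => hv' (dvd_iff_isRoot.mpr h)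
  simp only [eval_mul, eval_sub, eval_add, eval_C, eval_X, hR, hR0, sub_self, zero_mul, add_zero, sub_zero] at h4
  have h5 : (2 * ((a:ℝ) - b) - 1) * (2 * e * E.eval s * u.eval s * v.eval s) = 0 := by
    linear_combination h4
  have h6 : 2 * ((a:ℝ) - b) - 1 = 0 := by
    rcases mul_eq_zero.mp h5 with h | h
    · exact h
    · exfalso
      have : (2 * e * E.eval s * u.eval s * v.eval s) ≠ 0 := by positivity
      exact this h
  have h7 : 2 * ((a:ℤ) - b) - 1 = 0 := by exact_mod_cast h6
  omega

open Polynomial in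
theorem sep (h e e0 : ℕ) (he : e ≤ h) (he0 : e0 ≤ h) (hne : e ≠ e0) (y y0 : ℝ[X]) (hy : y ≠ 0) (hy0 : y0 ≠ 0) :
    PiP ℝ h * (y0 * derivative y - derivative y0 * y) ≠ (RP ℝ h e - RP ℝ h e0) * y * y0 := by
  rcases lt_or_gt_of_ne hne with hlt | hlt
  · intro heq
    refine sep_aux h e0 e he0 hlt y0 y hy0 hy ?_
    linear_combination -heq
  · exact sep_aux h e e0 he hlt y y0 hy hy0

open Polynomial in
theorem RP_rel (h e : ℕ) (he : e ≤ h) : 2 * (RP ℤ h e) * PiP ℤ e = PiP ℤ h * derivative (PiP ℤ e) := by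
  have : derivative (PiP ℤ e) = ∑ j ∈ Finset.Icc 1 e,
      (∏ l ∈ (Finset.Icc 1 e).erase j, (1 + C (4 * (l:ℤ)) * X)) * C (4 * (j:ℤ)) := by
    rw [PiP, derivative_prod_finset]
    refine Finset.sum_congr rfl fun j _ => ?_
    congr 1
    rw [derivative_add, derivative_one, derivative_C_mul, derivative_X]; simp
  rw [this, RP, Finset.mul_sum, Finset.mul_sum, Finset.sum_mul]
  refine Finset.sum_congr rfl fun j hj => ?_
  have hj' : j ∈ Finset.Icc 1 h := by
    rw [Finset.mem_Icc] at hj ⊢; omega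
  rw [PiP, PiP, ← Finset.mul_prod_erase _ _ hj, ← Finset.mul_prod_erase _ _ hj']
  have : (C (4 * (j:ℤ)) : ℤ[X]) = 2 * C (2 * (j:ℤ)) := by
    rw [show (2:ℤ[X]) = C 2 from rfl, ← C_mul]; congr 1; ring
  rw [this]; ring

open Polynomial in
theorem F_rel (h e : ℕ) (he : e ≤ h) (F : PowerSeries ℤ) (hF : F ^ 2 = ((PiP ℤ e : ℤ[X]) : PowerSeries ℤ))
    (hF0 : PowerSeries.coeff 0 F = 1) :
    ((PiP ℤ h : ℤ[X]) : PowerSeries ℤ) * PowerSeries.derivative ℤ F =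
      ((RP ℤ h e : ℤ[X]) : PowerSeries ℤ) * F := by
  have hne : F ≠ 0 := by rintro rfl; simp at hF0
  have h1 := congrArg (PowerSeries.derivative ℤ) hF
  rw [PowerSeries.derivative_coe, PowerSeries.derivative_pow] at h1
  have h2 := congrArg (fun p : ℤ[X] => (p : PowerSeries ℤ)) (RP_rel h e he)
  simp only [Polynomial.coe_mul] at h2
  rw [← h1, ← hF] at h2
  have e2 : (((2:ℤ[X])) : PowerSeries ℤ) = 2 := by
    rw [show (2:ℤ[X]) = 1 + 1 by norm_num, Polynomial.coe_add, Polynomial.coe_one]; norm_num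
  rw [e2] at h2
  have h3 : (2 * F) * (((PiP ℤ h : ℤ[X]) : PowerSeries ℤ) * PowerSeries.derivative ℤ F) =
      (2 * F) * (((RP ℤ h e : ℤ[X]) : PowerSeries ℤ) * F) := by
    simp only [Nat.cast_ofNat, Nat.add_one_sub_one, pow_one] at h2
    linear_combination -h2
  have h20 : (2 : PowerSeries ℤ) ≠ 0 := by
    intro h
    have := congrArg (PowerSeries.constantCoeff (R := ℤ)) h
    rw [map_ofNat, map_zero] at this
    norm_num at this
  exact mul_left_cancel₀ (mul_ne_zero h20 hne) h3

open Polynomial in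
theorem vanish {ι : Type*} [Fintype ι] (h : ℕ) (e : ι → ℕ) (he : ∀ i, e i ≤ h) (F : ι → PowerSeries ℤ)
    (hF : ∀ i, F i ^ 2 = ((PiP ℤ (e i) : ℤ[X]) : PowerSeries ℤ))
    (hF0 : ∀ i, PowerSeries.coeff 0 (F i) = 1) (q : ι → ℤ[X]) (M : ℕ)
    (hM : (PowerSeries.X : PowerSeries ℤ) ^ M ∣ ∑ i, (q i : PowerSeries ℤ) * F i) :
    ∀ j, (PowerSeries.X : PowerSeries ℤ) ^ (M - j) ∣
      ∑ i, ((wv (PiP ℤ h) (RP ℤ h (e i)) (q i) j : ℤ[X]) : PowerSeries ℤ) * F i := by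
  intro j
  induction j with
  | zero => simpa [wv_zero] using hM
  | succ j ih =>
    have e1 : ∑ i, ((wv (PiP ℤ h) (RP ℤ h (e i)) (q i) (j+1) : ℤ[X]) : PowerSeries ℤ) * F i =
        ((PiP ℤ h : ℤ[X]) : PowerSeries ℤ) * PowerSeries.derivative ℤ
          (∑ i, ((wv (PiP ℤ h) (RP ℤ h (e i)) (q i) j : ℤ[X]) : PowerSeries ℤ) * F i) := by
      rw [map_sum, Finset.mul_sum]
      refine Finset.sum_congr rfl fun i _ => ?_
      rw [wv_succ, Derivation.leibniz, PowerSeries.derivative_coe]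
      simp only [Polynomial.coe_add, Polynomial.coe_mul, smul_eq_mul]
      linear_combination (-((wv (PiP ℤ h) (RP ℤ h (e i)) (q i) j : ℤ[X]) : PowerSeries ℤ)) *
        F_rel h (e i) (he i) (F i) (hF i) (hF0 i)
    rw [e1]
    apply Dvd.dvd.mul_left
    rw [PowerSeries.X_pow_dvd_iff] at ih ⊢
    intro m hm
    rw [PowerSeries.coeff_derivative, ih (m+1) (by omega), zero_mul]

/-! ### Length of an integer polynomial -/

open Polynomial in
noncomputable def L1 (p : ℤ[X]) : ℝ := ∑ m ∈ p.support, |(p.coeff m : ℝ)|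

open Polynomial in
theorem L1_nonneg (p : ℤ[X]) : 0 ≤ L1 p := Finset.sum_nonneg fun _ _ => abs_nonneg _

open Polynomial in
theorem L1_eq (p : ℤ[X]) (s : Finset ℕ) (hs : p.support ⊆ s) : L1 p = ∑ m ∈ s, |(p.coeff m : ℝ)| := by
  refine Finset.sum_subset hs fun m _ hm => ?_
  simp [notMem_support_iff.mp hm]

open Polynomial in
theorem L1_add (p q : ℤ[X]) : L1 (p + q) ≤ L1 p + L1 q := by
  rw [L1_eq (p+q) (p.support ∪ q.support) support_add, L1_eq p _ Finset.subset_union_left,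
    L1_eq q _ Finset.subset_union_right, ← Finset.sum_add_distrib]
  refine Finset.sum_le_sum fun m _ => ?_
  rw [coeff_add]; push_cast; exact abs_add_le _ _

open Polynomial in
theorem L1_zero : L1 0 = 0 := by simp [L1]

open Polynomial in
theorem L1_sum {ι : Type*} (s : Finset ι) (f : ι → ℤ[X]) : L1 (∑ i ∈ s, f i) ≤ ∑ i ∈ s, L1 (f i) := by
  induction s using Finset.induction_on with
  | empty => simp [L1_zero]
  | insert a s ha ih =>
    rw [Finset.sum_insert ha, Finset.sum_insert ha]
    exact (L1_add _ _).trans (by gcongr)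

open Polynomial in
theorem L1_mono_mul (n : ℕ) (a : ℤ) (q : ℤ[X]) : L1 (monomial n a * q) ≤ |(a:ℝ)| * L1 q := by
  have : L1 (monomial n a * q) = L1 ((C a * q) * X ^ n) := by
    rw [← C_mul_X_pow_eq_monomial]; ring_nf
  rw [this]
  have hs : ((C a * q) * X ^ n).support ⊆ q.support.map (addRightEmbedding n) := by
    intro m hm
    rw [mem_support_iff, coeff_mul_X_pow'] at hm
    split_ifs at hm with h
    · rw [Finset.mem_map]
      refine ⟨m - n, ?_, by simp [h]⟩
      rw [mem_support_iff]
      intro h0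
      rw [coeff_C_mul, h0, mul_zero] at hm
      exact hm rfl
    · exact absurd rfl hm
  rw [L1_eq _ _ hs, Finset.sum_map, L1, Finset.mul_sum]
  refine Finset.sum_le_sum fun m _ => ?_
  rw [addRightEmbedding_apply, coeff_mul_X_pow, coeff_C_mul]
  push_cast
  rw [abs_mul]

open Polynomial in
theorem L1_mul (p q : ℤ[X]) : L1 (p * q) ≤ L1 p * L1 q := by
  conv_lhs => rw [p.as_sum_support, Finset.sum_mul]
  refine (L1_sum _ _).trans ?_
  rw [L1, Finset.sum_mul]
  exact Finset.sum_le_sum fun m _ => L1_mono_mul _ _ _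

open Polynomial in
theorem L1_C (a : ℤ) : L1 (C a) ≤ |(a:ℝ)| := by
  rw [L1_eq (C a) {0} (support_C_subset a)]; simp

open Polynomial in
theorem L1_X : L1 X ≤ 1 := by
  rw [L1_eq X {1} (by simp)]; simp

open Polynomial in
theorem L1_prod {ι : Type*} (s : Finset ι) (f : ι → ℤ[X]) : L1 (∏ i ∈ s, f i) ≤ ∏ i ∈ s, L1 (f i) := by
  induction s using Finset.induction_on with
  | empty => simpa using L1_C 1
  | insert a s ha ih =>
    rw [Finset.prod_insert ha, Finset.prod_insert ha]
    exact (L1_mul _ _).trans (mul_le_mul_of_nonneg_left ih (L1_nonneg _))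

open Polynomial in
theorem L1_derivative (p : ℤ[X]) (D : ℕ) (hD : p.natDegree ≤ D) : L1 (derivative p) ≤ D * L1 p := by
  conv_lhs => rw [p.as_sum_support, derivative_sum]
  refine (L1_sum _ _).trans ?_
  rw [L1, Finset.mul_sum]
  refine Finset.sum_le_sum fun m hm => ?_
  rw [derivative_monomial]
  have h1 := L1_mono_mul (m-1) (p.coeff m * m) 1
  rw [mul_one] at h1
  refine h1.trans ?_
  have h2 : L1 1 ≤ 1 := by simpa using L1_C 1
  have h3 : (m:ℝ) ≤ D := by
    exact_mod_cast (le_natDegree_of_mem_supp m hm).trans hD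
  push_cast
  rw [abs_mul, Nat.abs_cast]
  calc _ ≤ |(p.coeff m : ℝ)| * m * 1 := by gcongr
    _ ≤ D * |(p.coeff m : ℝ)| := by rw [mul_one, mul_comm]; gcongr

open Polynomial in
theorem abs_coeff_le_L1 (p : ℤ[X]) (m : ℕ) : |(p.coeff m : ℝ)| ≤ L1 p := by
  by_cases h : m ∈ p.support
  · exact Finset.single_le_sum (f := fun m => |(p.coeff m : ℝ)|) (fun _ _ => abs_nonneg _) h
  · rw [notMem_support_iff.mp h]; simpa using L1_nonneg p

open Polynomial in
theorem abs_eval_le_L1 (p : ℤ[X]) (s : ℝ) (h0 : 0 ≤ s) (h1 : s ≤ 1) :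
    |(p.map (Int.castRingHom ℝ)).eval s| ≤ L1 p := by
  rw [eval_map, eval₂_eq_sum, Polynomial.sum, L1]
  refine (Finset.abs_sum_le_sum_abs _ _).trans (Finset.sum_le_sum fun m _ => ?_)
  rw [abs_mul, abs_pow, abs_of_nonneg h0]
  exact mul_le_of_le_one_right (abs_nonneg _) (pow_le_one₀ h0 h1)

open Polynomial in
theorem L1_fac (j : ℕ) : L1 (1 + C (4 * (j:ℤ)) * X) ≤ 1 + 4 * j := by
  refine (L1_add _ _).trans ?_
  have h2 : L1 1 ≤ 1 := by simpa using L1_C 1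
  have h3 : L1 (C (4 * (j:ℤ)) * X) ≤ 4 * j := by
    refine (L1_mul _ _).trans ?_
    have := L1_C (4 * (j:ℤ))
    calc _ ≤ |((4 * (j:ℤ) : ℤ) : ℝ)| * 1 := by
          exact mul_le_mul this L1_X (L1_nonneg _) (abs_nonneg _)
      _ = _ := by push_cast; rw [mul_one, abs_of_nonneg]; positivity
  linarith

open Polynomial in
theorem L1_facprod (h : ℕ) (s : Finset ℕ) (hs : s ⊆ Finset.Icc 1 h) :
    L1 (∏ l ∈ s, (1 + C (4 * (l:ℤ)) * X)) ≤ (5 * h) ^ h := by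
  refine (L1_prod _ _).trans ?_
  rcases Nat.eq_zero_or_pos h with rfl | hpos
  · have : s = ∅ := by simpa using hs
    simp [this]
  have h1 : (1:ℝ) ≤ h := by exact_mod_cast hpos
  calc _ ≤ ∏ l ∈ s, (5 * (h:ℝ)) := by
        refine Finset.prod_le_prod (fun _ _ => L1_nonneg _) fun l hl => ?_
        have h2 : (l:ℝ) ≤ h := by exact_mod_cast (Finset.mem_Icc.mp (hs hl)).2
        linarith [L1_fac l]
    _ = (5 * (h:ℝ)) ^ s.card := by simp
    _ ≤ _ := by
        refine pow_le_pow_right₀ (by linarith) ?_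
        simpa using Finset.card_le_card hs

open Polynomial in
theorem L1_PiP (h : ℕ) : L1 (PiP ℤ h) ≤ (5 * h) ^ h := L1_facprod h _ (Finset.Subset.refl _)

open Polynomial in
theorem L1_RP (h e : ℕ) (he : e ≤ h) : L1 (RP ℤ h e) ≤ 2 * h ^ 2 * (5 * h) ^ h := by
  refine (L1_sum _ _).trans ?_
  calc _ ≤ ∑ j ∈ Finset.Icc 1 e, (2 * (h:ℝ)) * (5 * h) ^ h := by
        refine Finset.sum_le_sum fun j hj => (L1_mul _ _).trans ?_
        have h2 : (j:ℝ) ≤ h := by exact_mod_cast (Finset.mem_Icc.mp hj).2.trans he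
        have h3 : L1 (C (2 * (j:ℤ))) ≤ 2 * h := by
          refine (L1_C _).trans ?_
          push_cast
          rw [abs_of_nonneg (by positivity)]; linarith
        have := L1_facprod h ((Finset.Icc 1 h).erase j) (Finset.erase_subset _ _)
        have := L1_nonneg (∏ l ∈ (Finset.Icc 1 h).erase j, (1 + C (4 * (l:ℤ)) * X))
        gcongr
    _ = e * ((2 * (h:ℝ)) * (5 * h) ^ h) := by simp
    _ ≤ h * ((2 * (h:ℝ)) * (5 * h) ^ h) := by gcongr
    _ = _ := by ring

open Polynomial in
theorem natDegree_facprod (K : Type*) [CommRing K] (s : Finset ℕ) :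
    (∏ l ∈ s, (1 + C (4 * (l:K)) * X)).natDegree ≤ s.card := by
  refine (natDegree_prod_le _ _).trans ?_
  calc _ ≤ ∑ l ∈ s, 1 := by
        refine Finset.sum_le_sum fun l _ => ?_
        compute_degree
    _ = _ := by simp

open Polynomial in
theorem natDegree_PiP (K : Type*) [CommRing K] (h : ℕ) : (PiP K h).natDegree ≤ h := by
  have := natDegree_facprod K (Finset.Icc 1 h)
  rwa [Nat.card_Icc, Nat.add_sub_cancel] at this

open Polynomial in
theorem natDegree_RP (K : Type*) [CommRing K] (h e : ℕ) : (RP K h e).natDegree ≤ h := by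
  refine natDegree_sum_le_of_forall_le _ _ fun j _ => ?_
  refine (natDegree_C_mul_le _ _).trans ((natDegree_facprod K _).trans ?_)
  simpa using Finset.card_le_card (Finset.erase_subset j (Finset.Icc 1 h))

open Polynomial in
theorem natDegree_wv (K : Type*) [CommRing K] (h e : ℕ) (q : K[X]) (k : ℕ) (hq : q.natDegree ≤ k) (j : ℕ) :
    (wv (PiP K h) (RP K h e) q j).natDegree ≤ k + j * h := by
  induction j with
  | zero => simpa [wv_zero] using hq
  | succ j ih =>
    rw [wv_succ]
    refine natDegree_add_le_of_degree_le ?_ ?_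
    · refine natDegree_mul_le.trans ?_
      have := natDegree_PiP K h
      have := natDegree_derivative_le (wv (PiP K h) (RP K h e) q j)
      rw [Nat.succ_mul]; omega
    · refine natDegree_mul_le.trans ?_
      have := natDegree_RP K h e
      rw [Nat.succ_mul]; omega

open Polynomial in
theorem L1_wv (h e : ℕ) (he : e ≤ h) (q : ℤ[X]) (k J : ℕ) (hq : q.natDegree ≤ k) (H : ℝ) (hH : L1 q ≤ H)
    (Γ : ℝ) (hΓ : ((k + J * h : ℕ) + 2 * (h:ℝ) ^ 2) * (5 * h) ^ h ≤ Γ) (j : ℕ) (hj : j ≤ J) :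
    L1 (wv (PiP ℤ h) (RP ℤ h e) q j) ≤ H * Γ ^ j := by
  induction j with
  | zero => simpa [wv_zero] using hH
  | succ j ih =>
    have ih := ih (by omega)
    have hdeg := natDegree_wv ℤ h e q k hq j
    have hdeg' : (wv (PiP ℤ h) (RP ℤ h e) q j).natDegree ≤ k + J * h :=
      hdeg.trans (by gcongr; omega)
    have hd := L1_derivative _ _ hdeg'
    have n0 := L1_nonneg (wv (PiP ℤ h) (RP ℤ h e) q j)
    rw [wv_succ]
    set w := wv (PiP ℤ h) (RP ℤ h e) q j
    calc _ ≤ L1 (PiP ℤ h * derivative w) + L1 (w * RP ℤ h e) := L1_add _ _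
      _ ≤ L1 (PiP ℤ h) * L1 (derivative w) + L1 w * L1 (RP ℤ h e) := add_le_add (L1_mul _ _) (L1_mul _ _)
      _ ≤ (5 * h) ^ h * ((k + J * h : ℕ) * L1 w) + L1 w * (2 * h ^ 2 * (5 * h) ^ h) := by
          gcongr
          · exact L1_nonneg _
          · exact L1_PiP h
          · exact L1_RP h e he
      _ = L1 w * (((k + J * h : ℕ) + 2 * (h:ℝ) ^ 2) * (5 * h) ^ h) := by ring
      _ ≤ (H * Γ ^ j) * Γ := by
          have : 0 ≤ ((k + J * h : ℕ) + 2 * (h:ℝ) ^ 2) * (5 * h) ^ h := by positivity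
          exact mul_le_mul ih hΓ this (n0.trans ih)
      _ = _ := by ring

/-! ### Evaluating integer power series at small reals -/

noncomputable def ev (s : ℝ) (F : PowerSeries ℤ) : ℝ := ∑' m, ((PowerSeries.coeff m F : ℤ) : ℝ) * s ^ m

def Sm (s : ℝ) (F : PowerSeries ℤ) : Prop := Summable fun m => ‖((PowerSeries.coeff m F : ℤ) : ℝ) * s ^ m‖

theorem coeff_mul_aux (s : ℝ) (F G : PowerSeries ℤ) (m : ℕ) :
    ((PowerSeries.coeff m (F * G) : ℤ) : ℝ) * s ^ m = ∑ kl ∈ Finset.HasAntidiagonal.antidiagonal m,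
      (((PowerSeries.coeff kl.1 F : ℤ) : ℝ) * s ^ kl.1) * (((PowerSeries.coeff kl.2 G : ℤ) : ℝ) * s ^ kl.2) := by
  rw [PowerSeries.coeff_mul]
  push_cast
  rw [Finset.sum_mul]
  refine Finset.sum_congr rfl fun kl hkl => ?_
  rw [← Finset.HasAntidiagonal.mem_antidiagonal.mp hkl, pow_add]; ring

theorem ev_mul (s : ℝ) (F G : PowerSeries ℤ) (hF : Sm s F) (hG : Sm s G) :
    Sm s (F * G) ∧ ev s (F * G) = ev s F * ev s G := by
  constructor
  · have := summable_norm_sum_mul_antidiagonal_of_summable_norm hF hG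
    unfold Sm
    simpa only [coeff_mul_aux] using this
  · unfold ev
    rw [tsum_mul_tsum_eq_tsum_sum_antidiagonal_of_summable_norm hF hG]
    simp only [coeff_mul_aux]

open Polynomial in
theorem ev_poly (s : ℝ) (p : ℤ[X]) : Sm s (p : PowerSeries ℤ) ∧
    ev s (p : PowerSeries ℤ) = (p.map (Int.castRingHom ℝ)).eval s := by
  have h0 : ∀ m ∉ p.support, ((PowerSeries.coeff m (p : PowerSeries ℤ) : ℤ) : ℝ) * s ^ m = 0 := by
    intro m hm
    rw [Polynomial.coeff_coe, notMem_support_iff.mp hm]; simp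
  constructor
  · refine summable_of_ne_finset_zero (s := p.support) fun m hm => ?_
    rw [h0 m hm, norm_zero]
  · rw [ev, tsum_eq_sum (s := p.support) h0, eval_map, eval₂_eq_sum, Polynomial.sum]
    simp

theorem ev_sum {ι : Type*} (s : ℝ) (t : Finset ι) (F : ι → PowerSeries ℤ) (hF : ∀ i ∈ t, Sm s (F i)) :
    ev s (∑ i ∈ t, F i) = ∑ i ∈ t, ev s (F i) := by
  unfold ev
  rw [← Summable.tsum_finsetSum fun i hi => (hF i hi).of_norm]
  refine tsum_congr fun m => ?_
  rw [map_sum]; push_cast; rw [Finset.sum_mul]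

theorem ev_tail (s : ℝ) (hs : 0 ≤ s) (F : PowerSeries ℤ) (K B : ℝ) (m0 : ℕ) (hB : 0 ≤ B) (hBs : B * s ≤ 1/2)
    (h0 : ∀ m < m0, PowerSeries.coeff m F = 0)
    (hc : ∀ m, |((PowerSeries.coeff m F : ℤ) : ℝ)| ≤ K * B ^ m) :
    Sm s F ∧ |ev s F| ≤ 2 * K * (B * s) ^ m0 := by
  have hK : 0 ≤ K := by simpa using (abs_nonneg _).trans (hc 0)
  have hρ : 0 ≤ B * s := by positivity
  have hb : ∀ m, ‖((PowerSeries.coeff m F : ℤ) : ℝ) * s ^ m‖ ≤ K * (B * s) ^ m := by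
    intro m
    rw [norm_mul, norm_pow, Real.norm_of_nonneg hs, Real.norm_eq_abs, mul_pow, ← mul_assoc]
    gcongr
    exact hc m
  have hg : Summable fun m => K * (B * s) ^ m :=
    (summable_geometric_of_lt_one hρ (by linarith)).mul_left K
  have hS : Sm s F := Summable.of_nonneg_of_le (fun _ => norm_nonneg _) hb hg
  refine ⟨hS, ?_⟩
  have h1 : ev s F = ∑' m, ((PowerSeries.coeff (m + m0) F : ℤ) : ℝ) * s ^ (m + m0) := by
    unfold ev
    rw [← hS.of_norm.sum_add_tsum_nat_add m0, Finset.sum_eq_zero, zero_add]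
    intro m hm
    rw [h0 m (Finset.mem_range.mp hm)]; simp
  have h2 : HasSum (fun m => K * (B * s) ^ m0 * (B * s) ^ m) (K * (B * s) ^ m0 * (1 - B * s)⁻¹) :=
    (hasSum_geometric_of_lt_one hρ (by linarith)).mul_left _
  rw [h1, ← Real.norm_eq_abs]
  refine (tsum_of_norm_bounded h2 fun m => ?_).trans ?_
  · refine (hb (m + m0)).trans (le_of_eq ?_)
    rw [pow_add]; ring
  · have h3 : (1 - B * s)⁻¹ ≤ 2 := by
      rw [inv_le_comm₀ (by linarith) (by norm_num)]; linarith
    calc _ ≤ K * (B * s) ^ m0 * 2 := by gcongr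
      _ = _ := by ring

/-- value of the square root series is at least one -/
theorem ev_sqrt (s : ℝ) (hs : 0 ≤ s) (e : ℕ) (F : PowerSeries ℤ) (B : ℝ) (hB : 0 ≤ B) (hBs : B * s ≤ 1/8)
    (hF : F ^ 2 = ((PiP ℤ e : Polynomial ℤ) : PowerSeries ℤ)) (hF0 : PowerSeries.coeff 0 F = 1)
    (hc : ∀ m, |((PowerSeries.coeff m F : ℤ) : ℝ)| ≤ B ^ m) :
    0 < ev s F ∧ ev s F ^ 2 = (PiP ℝ e).eval s := by
  have hS := (ev_tail s hs F 1 B 0 hB (by linarith) (by simp) (by simpa using hc)).1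
  constructor
  · have e1 : ev s F = ev s (F - 1) + 1 := by
      have : F = ∑ i ∈ (Finset.univ : Finset (Fin 2)), ![F - 1, 1] i := by simp
      have hS1 : Sm s (F - 1) := by
        refine (ev_tail s hs (F-1) 2 B 0 hB (by linarith) (by simp) fun m => ?_).1
        rw [map_sub]
        push_cast
        refine (abs_sub _ _).trans ?_
        have := hc m
        by_cases hm : m = 0
        · subst hm; simp [hF0]; norm_num
        · have : 0 ≤ B ^ m := by positivity
          simp [PowerSeries.coeff_one, hm]; linarith
      have h2 := ev_poly s 1
      rw [Polynomial.coe_one] at h2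
      conv_lhs => rw [this]
      rw [ev_sum]
      · simp [h2.2]
      · intro i _
        fin_cases i
        · simpa using hS1
        · simpa using h2.1
    have h3 := (ev_tail s hs (F-1) 1 B 1 hB (by linarith) (by
        intro m hm
        have : m = 0 := by omega
        subst this
        simp [map_sub, hF0]) fun m => ?_).2
    · rw [pow_one] at h3
      have := (abs_le.mp h3).1
      rw [e1]; linarith
    · rw [map_sub]
      by_cases hm : m = 0
      · subst hm; simp [hF0]
      · simp [PowerSeries.coeff_one, hm]; exact hc m
  · rw [pow_two, ← (ev_mul s F F hS hS).2, ← pow_two, hF, (ev_poly s _).2, PiP_map]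

/-! ### The auxiliary construction -/

attribute [local instance] Matrix.seminormedAddCommGroup in
open Polynomial in
theorem siegel (F : Fin 16 → PowerSeries ℤ) (B : ℝ) (hB : 1 ≤ B)
    (hc : ∀ i m, |((PowerSeries.coeff m (F i) : ℤ) : ℝ)| ≤ B ^ m) (k : ℕ) (hk : 0 < k) :
    ∃ q : Fin 16 → ℤ[X], q ≠ 0 ∧ (∀ i, (q i).natDegree ≤ k) ∧ (∀ i, L1 (q i) ≤ 16 * k ^ 2 * B ^ (8 * k)) ∧
      (PowerSeries.X : PowerSeries ℤ) ^ (8 * k) ∣ ∑ i, (q i : PowerSeries ℤ) * F i := by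
  let A : Matrix (Fin (8 * k)) (Fin 16 × Fin k) ℤ :=
    Matrix.of fun m il => PowerSeries.coeff (m:ℕ) ((PowerSeries.X : PowerSeries ℤ) ^ (il.2:ℕ) * F il.1)
  obtain ⟨t, ht0, htA, htn⟩ := Int.Matrix.exists_ne_zero_int_vec_norm_le A
    (by simp; omega) (by simp; omega)
  have hBk : 1 ≤ B ^ (8 * k) := one_le_pow₀ hB
  have hA : ‖A‖ ≤ B ^ (8 * k) := by
    rw [Matrix.norm_le_iff (by linarith)]
    intro m il
    have : ‖A m il‖ = |((A m il : ℤ) : ℝ)| := rfl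
    rw [this]
    simp only [A, Matrix.of_apply, PowerSeries.coeff_X_pow_mul']
    split_ifs with h
    · refine (hc _ _).trans (pow_le_pow_right₀ hB ?_)
      have := m.2; omega
    · simp; linarith
  have htb : ∀ il, |(t il : ℝ)| ≤ 16 * k * B ^ (8 * k) := by
    intro il
    have h1 : |(t il : ℝ)| ≤ ‖t‖ := norm_le_pi_norm t il
    have hk' : (k:ℝ) ≠ 0 := by positivity
    have e1 : ((Fintype.card (Fin (8 * k)) : ℝ) / (Fintype.card (Fin 16 × Fin k) - Fintype.card (Fin (8 * k)))) = 1 := by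
      simp
      rw [div_eq_one_iff_eq] <;> ring_nf
      positivity
    rw [e1, Real.rpow_one] at htn
    refine h1.trans (htn.trans ?_)
    have h2 : max 1 ‖A‖ ≤ B ^ (8 * k) := max_le hBk hA
    have h3 : (Fintype.card (Fin 16 × Fin k) : ℝ) = 16 * k := by simp
    rw [h3]
    gcongr
  let q : Fin 16 → ℤ[X] := fun i => ∑ l : Fin k, monomial (l:ℕ) (t (i, l))
  have hcoef : ∀ i (l : Fin k), (q i).coeff l = t (i, l) := by
    intro i l
    simp only [q, finsetSum_coeff, coeff_monomial]
    rw [Finset.sum_eq_single l]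
    · simp
    · intro b _ hb
      rw [if_neg]
      exact fun h => hb (Fin.ext h)
    · simp
  refine ⟨q, ?_, ?_, ?_, ?_⟩
  · intro h0
    apply ht0
    funext ⟨i, l⟩
    rw [← hcoef i l, h0]; simp
  · intro i
    refine natDegree_sum_le_of_forall_le _ _ fun l _ => ?_
    exact (natDegree_monomial_le _).trans l.2.le
  · intro i
    refine (L1_sum _ _).trans ?_
    calc _ ≤ ∑ l : Fin k, 16 * k * B ^ (8 * k) := by
          refine Finset.sum_le_sum fun l _ => ?_
          have h1 := L1_mono_mul (l:ℕ) (t (i, l)) 1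
          have h2 : L1 1 ≤ 1 := by simpa using L1_C 1
          rw [mul_one] at h1
          refine h1.trans (le_trans ?_ (htb (i, l)))
          exact mul_le_of_le_one_right (abs_nonneg _) h2
      _ = _ := by simp; ring
  · rw [PowerSeries.X_pow_dvd_iff]
    intro m hm
    have h1 := congrFun htA ⟨m, hm⟩
    rw [Pi.zero_apply] at h1
    rw [← h1, Matrix.mulVec, dotProduct, Fintype.sum_prod_type, map_sum]
    refine Finset.sum_congr rfl fun i _ => ?_
    have : ((q i : ℤ[X]) : PowerSeries ℤ) = ∑ l : Fin k, PowerSeries.C (t (i, l)) * PowerSeries.X ^ (l:ℕ) := by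
      simp only [q]
      rw [← Polynomial.coeToPowerSeries.ringHom_apply, map_sum]
      refine Finset.sum_congr rfl fun l _ => ?_
      rw [Polynomial.coeToPowerSeries.ringHom_apply, ← C_mul_X_pow_eq_monomial,
        Polynomial.coe_mul, Polynomial.coe_C, Polynomial.coe_pow, Polynomial.coe_X]
    rw [this, Finset.sum_mul, map_sum]
    refine Finset.sum_congr rfl fun l _ => ?_
    rw [mul_assoc, PowerSeries.coeff_C_mul]
    simp only [A, Matrix.of_apply]
    ring

open Polynomial in
theorem int_eval (p : ℤ[X]) (D : ℕ) (hD : p.natDegree ≤ D) (t : ℕ) (ht : 0 < t) :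
    ∃ z : ℤ, (t:ℝ) ^ D * (p.map (Int.castRingHom ℝ)).eval (1 / (t:ℝ)) = z := by
  refine ⟨∑ m ∈ Finset.range (D + 1), p.coeff m * (t:ℤ) ^ (D - m), ?_⟩
  rw [eval_map, eval₂_eq_sum_range' _ (Nat.lt_succ_of_le hD), Finset.mul_sum]
  push_cast
  refine Finset.sum_congr rfl fun m hm => ?_
  have hm' : m ≤ D := by simpa [Nat.lt_succ_iff] using hm
  have : (t:ℝ) ^ D = t ^ (D - m) * t ^ m := by rw [← pow_add, Nat.sub_add_cancel hm']
  have ht' : (t:ℝ) ≠ 0 := by positivity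
  rw [this]
  simp only [eq_intCast]
  rw [one_div, inv_pow]
  field_simp

theorem fact_eval (n e : ℕ) (hn : 0 < n) :
    ((n + e)! : ℝ) = n ! * (n:ℝ) ^ e * (PiP ℝ e).eval (1 / ((4 * n : ℕ) : ℝ)) := by
  have hn' : (n:ℝ) ≠ 0 := by positivity
  induction e with
  | zero => simp [PiP]
  | succ e ih =>
    have : PiP ℝ (e+1) = PiP ℝ e * (1 + Polynomial.C (4 * ((e+1:ℕ):ℝ)) * Polynomial.X) := by
      rw [PiP, Finset.prod_Icc_succ_top (by omega)]; rfl
    rw [this, ← add_assoc, Nat.factorial_succ]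
    push_cast
    push_cast at ih
    rw [ih]
    simp only [Polynomial.eval_mul, Polynomial.eval_add, Polynomial.eval_one, Polynomial.eval_C, Polynomial.eval_X]
    field_simp
    ring

theorem PiP_eval_ge (e : ℕ) (s : ℝ) (hs : 0 ≤ s) : 1 ≤ (PiP ℝ e).eval s := by
  rw [PiP, Polynomial.eval_prod]
  have : ∏ j ∈ Finset.Icc 1 e, (1:ℝ) ≤ ∏ j ∈ Finset.Icc 1 e,
      (1 + Polynomial.C (4 * (j:ℝ)) * Polynomial.X).eval s := by
    refine Finset.prod_le_prod (fun _ _ => zero_le_one) fun j _ => ?_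
    simp
    positivity
  simpa using this

open Polynomial in
theorem coeff_mul_bound (p : ℤ[X]) (F : PowerSeries ℤ) (B : ℝ) (hB : 1 ≤ B)
    (hc : ∀ m, |((PowerSeries.coeff m F : ℤ) : ℝ)| ≤ B ^ m) (m : ℕ) :
    |((PowerSeries.coeff m ((p : PowerSeries ℤ) * F) : ℤ) : ℝ)| ≤ L1 p * B ^ m := by
  rw [PowerSeries.coeff_mul, Finset.Nat.sum_antidiagonal_eq_sum_range_succ_mk]
  push_cast
  refine (Finset.abs_sum_le_sum_abs _ _).trans ?_
  have h1 : ∑ k ∈ Finset.range (m+1), |(p.coeff k : ℝ)| ≤ L1 p := by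
    rw [L1_eq p (p.support ∪ Finset.range (m+1)) Finset.subset_union_left]
    exact Finset.sum_le_sum_of_subset_of_nonneg Finset.subset_union_right fun _ _ _ => abs_nonneg _
  calc _ ≤ ∑ k ∈ Finset.range (m+1), |(p.coeff k : ℝ)| * B ^ m := by
        refine Finset.sum_le_sum fun k _ => ?_
        rw [abs_mul]
        gcongr
        exact (hc _).trans (pow_le_pow_right₀ hB (by omega))
    _ ≤ _ := by rw [← Finset.sum_mul]; gcongr

open Polynomial in
theorem core (lam n D m0 : ℕ) (g x : Fin 16 → ℕ) (hg : ∀ i, g i ≤ lam) (hn : 0 < n)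
    (hx : ∀ i, (n + 2 * g i)! + 1 = x i ^ 2) (p : Fin 16 → ℤ[X]) (hpD : ∀ i, (p i).natDegree ≤ D)
    (HJ : ℝ) (hL : ∀ i, L1 (p i) ≤ HJ) (F : Fin 16 → PowerSeries ℤ) (B : ℝ) (hB : 1 ≤ B)
    (hF : ∀ i, F i ^ 2 = ((PiP ℤ (2 * g i) : ℤ[X]) : PowerSeries ℤ))
    (hF0 : ∀ i, PowerSeries.coeff 0 (F i) = 1)
    (hc : ∀ i m, |((PowerSeries.coeff m (F i) : ℤ) : ℝ)| ≤ B ^ m)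
    (hBn : B * (1 / ((4 * n : ℕ) : ℝ)) ≤ 1 / 8)
    (hM : (PowerSeries.X : PowerSeries ℤ) ^ m0 ∣ ∑ i, (p i : PowerSeries ℤ) * F i)
    (hnum : ((4 * n : ℕ) : ℝ) ^ D * (n:ℝ) ^ lam * (16 * HJ) *
      (2 * √(n ! : ℝ) * (B * (1 / ((4 * n : ℕ) : ℝ))) ^ m0 + 1 / √(n ! : ℝ)) < 1) :
    ∑ i, ((p i).map (Int.castRingHom ℝ)).eval (1 / ((4 * n : ℕ) : ℝ)) *
      ((n:ℝ) ^ (lam - g i) * x i) = 0 := by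
  set s : ℝ := 1 / ((4 * n : ℕ) : ℝ) with hs
  have hn1 : (1:ℝ) ≤ n := by exact_mod_cast hn
  have hn4 : (0:ℝ) < ((4 * n : ℕ) : ℝ) := by push_cast; linarith
  have hs0 : 0 < s := by rw [hs]; positivity
  have hs1 : s ≤ 1 := by
    rw [hs, div_le_one hn4]; push_cast; linarith
  set a : ℝ := √(n ! : ℝ) with ha
  have ha2 : a ^ 2 = n ! := Real.sq_sqrt (by positivity)
  have ha0 : 0 < a := Real.sqrt_pos.mpr (by exact_mod_cast Nat.factorial_pos n)
  have hHJ : 0 ≤ HJ := (L1_nonneg _).trans (hL 0)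
  let Y : Fin 16 → ℝ := fun i => ev s (F i)
  have hY : ∀ i, 0 < Y i ∧ Y i ^ 2 = (PiP ℝ (2 * g i)).eval s := fun i =>
    ev_sqrt s hs0.le _ (F i) B (by linarith) hBn (hF i) (hF0 i) (hc i)
  have hSm : ∀ i, Sm s (F i) := fun i =>
    (ev_tail s hs0.le (F i) 1 B 0 (by linarith) (by linarith) (by simp) (by simpa using hc i)).1
  -- the linear form in the square roots is tiny
  have hlin : |∑ i, ((p i).map (Int.castRingHom ℝ)).eval s * Y i| ≤ 2 * (16 * HJ) * (B * s) ^ m0 := by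
    have e1 : ∑ i, ((p i).map (Int.castRingHom ℝ)).eval s * Y i = ev s (∑ i, (p i : PowerSeries ℤ) * F i) := by
      rw [ev_sum]
      · refine Finset.sum_congr rfl fun i _ => ?_
        rw [(ev_mul s _ _ (ev_poly s (p i)).1 (hSm i)).2, (ev_poly s (p i)).2]
      · intro i _
        exact (ev_mul s _ _ (ev_poly s (p i)).1 (hSm i)).1
    rw [e1]
    refine (ev_tail s hs0.le _ (16 * HJ) B m0 (by linarith) (by linarith)
      (PowerSeries.X_pow_dvd_iff.mp hM) fun m => ?_).2
    rw [map_sum]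
    push_cast
    refine (Finset.abs_sum_le_sum_abs _ _).trans ?_
    calc _ ≤ ∑ i : Fin 16, HJ * B ^ m := by
          refine Finset.sum_le_sum fun i _ => (coeff_mul_bound _ _ B hB (hc i) m).trans ?_
          gcongr
          exact hL i
      _ = _ := by simp; ring
  -- x i is very close to a n^g Y
  have hclose : ∀ i, |(n:ℝ) ^ (lam - g i) * x i - a * (n:ℝ) ^ lam * Y i| ≤ (n:ℝ) ^ lam * (1 / a) := by
    intro i
    obtain ⟨hYp, hY2⟩ := hY i
    have hY1 : 1 ≤ Y i := by
      have := PiP_eval_ge (2 * g i) s hs0.le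
      rw [← hY2] at this
      nlinarith
    set z : ℝ := a * (n:ℝ) ^ (g i) * Y i with hz
    have hng : (1:ℝ) ≤ (n:ℝ) ^ (g i) := one_le_pow₀ hn1
    have hza : a ≤ z := by
      rw [hz]
      calc a = a * 1 * 1 := by ring
        _ ≤ _ := by gcongr
    have hxz : (x i : ℝ) ^ 2 = z ^ 2 + 1 := by
      have h1 : (((n + 2 * g i)! : ℕ) : ℝ) + 1 = (x i : ℝ) ^ 2 := by exact_mod_cast hx i
      rw [← h1, fact_eval n _ hn, hz, mul_pow, mul_pow, ha2, hY2, ← pow_mul, mul_comm (g i) 2]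
    have hx0 : (0:ℝ) ≤ x i := Nat.cast_nonneg _
    have hxz' : z ≤ x i := by nlinarith
    have hd : (x i : ℝ) - z ≤ 1 / a := by
      rw [le_div_iff₀ ha0]
      nlinarith
    have e1 : (n:ℝ) ^ lam = (n:ℝ) ^ (lam - g i) * (n:ℝ) ^ (g i) := by
      rw [← pow_add, Nat.sub_add_cancel (hg i)]
    have e2 : (n:ℝ) ^ (lam - g i) * x i - a * (n:ℝ) ^ lam * Y i = (n:ℝ) ^ (lam - g i) * (x i - z) := by
      rw [e1, hz]; ring
    rw [e2, abs_mul, abs_of_nonneg (by linarith : 0 ≤ (x i : ℝ) - z), abs_of_nonneg (by positivity)]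
    have : (n:ℝ) ^ (lam - g i) ≤ (n:ℝ) ^ lam := pow_le_pow_right₀ hn1 (by omega)
    have h0 : (0:ℝ) ≤ x i - z := by linarith
    gcongr
  set T : ℝ := ∑ i, ((p i).map (Int.castRingHom ℝ)).eval s * ((n:ℝ) ^ (lam - g i) * x i) with hT
  have hTb : |T| ≤ (n:ℝ) ^ lam * (16 * HJ) * (2 * a * (B * s) ^ m0 + 1 / a) := by
    have e1 : T = a * (n:ℝ) ^ lam * (∑ i, ((p i).map (Int.castRingHom ℝ)).eval s * Y i) +
        ∑ i, ((p i).map (Int.castRingHom ℝ)).eval s *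
          ((n:ℝ) ^ (lam - g i) * x i - a * (n:ℝ) ^ lam * Y i) := by
      rw [hT, Finset.mul_sum, ← Finset.sum_add_distrib]
      refine Finset.sum_congr rfl fun i _ => by ring
    have h2 : |∑ i, ((p i).map (Int.castRingHom ℝ)).eval s *
          ((n:ℝ) ^ (lam - g i) * x i - a * (n:ℝ) ^ lam * Y i)| ≤ 16 * (HJ * ((n:ℝ) ^ lam * (1 / a))) := by
      refine (Finset.abs_sum_le_sum_abs _ _).trans ?_
      calc _ ≤ ∑ i : Fin 16, HJ * ((n:ℝ) ^ lam * (1 / a)) := by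
            refine Finset.sum_le_sum fun i _ => ?_
            rw [abs_mul]
            exact mul_le_mul ((abs_eval_le_L1 _ s hs0.le hs1).trans (hL i)) (hclose i) (abs_nonneg _) hHJ
        _ = _ := by simp
    rw [e1]
    refine (abs_add_le _ _).trans ?_
    rw [abs_mul, abs_of_nonneg (by positivity : 0 ≤ a * (n:ℝ) ^ lam)]
    calc _ ≤ a * (n:ℝ) ^ lam * (2 * (16 * HJ) * (B * s) ^ m0) + 16 * (HJ * ((n:ℝ) ^ lam * (1 / a))) := by
          gcongr
      _ = _ := by ring
  -- integrality
  have hInt : ∃ z : ℤ, ((4 * n : ℕ) : ℝ) ^ D * T = z := by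
    have h1 : ∀ i, ∃ z : ℤ, ((4 * n : ℕ) : ℝ) ^ D * ((p i).map (Int.castRingHom ℝ)).eval s = z :=
      fun i => int_eval (p i) D (hpD i) (4 * n) (by omega)
    choose z hz using h1
    refine ⟨∑ i, z i * ((n:ℤ) ^ (lam - g i) * x i), ?_⟩
    rw [hT, Finset.mul_sum]
    push_cast
    refine Finset.sum_congr rfl fun i _ => ?_
    rw [← hz i]; push_cast; ring
  obtain ⟨z, hz⟩ := hInt
  have hzlt : |(z:ℝ)| < 1 := by
    rw [← hz, abs_mul, abs_of_nonneg (by positivity)]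
    refine lt_of_le_of_lt ?_ hnum
    calc _ ≤ ((4 * n : ℕ) : ℝ) ^ D * ((n:ℝ) ^ lam * (16 * HJ) * (2 * a * (B * s) ^ m0 + 1 / a)) := by gcongr
      _ = _ := by ring
  have hz0 : z = 0 := by
    have : |z| < 1 := by exact_mod_cast hzlt
    exact Int.abs_lt_one_iff.mp this
  rw [hz0, Int.cast_zero] at hz
  exact (mul_eq_zero.mp hz).resolve_left (by positivity)

open Polynomial in
theorem natDegree_det_le {ι : Type} [Fintype ι] [DecidableEq ι] (A : Matrix ι ι ℝ[X]) (d : ℕ)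
    (hA : ∀ a b, (A a b).natDegree ≤ d) : A.det.natDegree ≤ Fintype.card ι * d := by
  rw [Matrix.det_apply']
  refine natDegree_sum_le_of_forall_le _ _ fun σ _ => ?_
  have h1 : (∏ i, A (σ i) i).natDegree ≤ Fintype.card ι * d := by
    refine (natDegree_prod_le _ _).trans ?_
    calc _ ≤ ∑ i : ι, d := Finset.sum_le_sum fun i _ => hA _ _
      _ = _ := by simp
  refine natDegree_mul_le.trans ?_
  rw [natDegree_intCast, zero_add]
  exact h1

open Polynomial in
theorem detcount (S : Finset ℕ) (hS : ∀ n ∈ S, 0 < n) (h k0 J : ℕ) (hJ : 16 ≤ J) (e : Fin 16 → ℕ)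
    (he : ∀ i, e i ≤ h) (hinj : Function.Injective e) (q : Fin 16 → ℤ[X]) (hq : q ≠ 0)
    (hdeg : ∀ i, (q i).natDegree ≤ k0) (v : ℕ → Fin 16 → ℝ) (hv : ∀ n ∈ S, ∀ i, v n i ≠ 0)
    (H : ∀ n ∈ S, ∀ j ≤ J, ∑ i, ((wv (PiP ℤ h) (RP ℤ h (e i)) (q i) j).map (Int.castRingHom ℝ)).eval
      (1 / ((4 * n : ℕ) : ℝ)) * v n i = 0) :
    S.card * (J - 14) ≤ 16 * (k0 + 16 * h) := by
  let ι := {i : Fin 16 // q i ≠ 0}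
  let qr : Fin 16 → ℝ[X] := fun i => (q i).map (Int.castRingHom ℝ)
  have hwv : ∀ i j, (wv (PiP ℤ h) (RP ℤ h (e i)) (q i) j).map (Int.castRingHom ℝ) =
      wv (PiP ℝ h) (RP ℝ h (e i)) (qr i) j := by
    intro i j
    rw [wv_map, PiP_map, RP_map]
  have hcard : Fintype.card ι ≤ 16 := by
    have := Fintype.card_subtype_le (fun i : Fin 16 => q i ≠ 0)
    rwa [Fintype.card_fin] at this
  let R : ι → ℝ[X] := fun i => RP ℝ h (e i.1)
  let q' : ι → ℝ[X] := fun i => qr i.1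
  have hq' : ∀ i, q' i ≠ 0 := by
    intro i h0
    exact i.2 ((Polynomial.map_eq_zero_iff (RingHom.injective_int (Int.castRingHom ℝ))).mp h0)
  let W : ℝ[X] := Matrix.det (Matrix.of fun a b => wv (PiP ℝ h) (R b) (q' b) (Fintype.equivFin ι a))
  have hW : W ≠ 0 := by
    refine det_ne_zero (PiP ℝ h) R q' hq' ?_
    intro i i0 hne y y0 hy hy0
    exact sep h _ _ (he _) (he _) (fun hh => hne (Subtype.ext (hinj hh))) y y0 hy hy0
  have hWdeg : W.natDegree ≤ 16 * (k0 + 16 * h) := by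
    refine (natDegree_det_le _ (k0 + 16 * h) fun a b => ?_).trans (Nat.mul_le_mul_right _ hcard)
    rw [Matrix.of_apply]
    refine (natDegree_wv ℝ h _ _ k0 ((natDegree_map_le).trans (hdeg _)) _).trans ?_
    have := (Fintype.equivFin ι a).2
    gcongr
    omega
  have hwv0 : ∀ (Rx : ℤ[X]) j, wv (PiP ℤ h) Rx (0:ℤ[X]) j = 0 := by
    intro Rx j
    induction j with
    | zero => rfl
    | succ j ih => rw [wv_succ, ih]; simp
  have hne : ∃ i, q i ≠ 0 := by
    by_contra hcon
    push Not at hcon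
    exact hq (funext hcon)
  obtain ⟨i1, hi1⟩ := hne
  have hdvd : ∀ n ∈ S, (X - C (1 / ((4 * n : ℕ) : ℝ))) ^ (J - 14) ∣ W := by
    intro n hn
    have h1 := det_mult (PiP ℝ h) R q' (1 / ((4 * n : ℕ) : ℝ))
      (by have := PiP_eval_ge h (1 / ((4 * n : ℕ) : ℝ)) (by positivity); linarith)
      (fun i => v n i.1) (fun h0 => hv n hn i1 (congrFun h0 ⟨i1, hi1⟩)) J ?_ (J - 15)
      (fun a => Fintype.equivFin ι a) ?_
    · rwa [show J - 15 + 1 = J - 14 by omega] at h1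
    · intro j hj
      have h2 := H n hn j hj
      rw [← h2, ← Finset.sum_filter_of_ne (p := fun i => q i ≠ 0),
        Finset.sum_subtype (Finset.univ.filter fun i => q i ≠ 0) (p := fun i => q i ≠ 0) (by simp)]
      · refine Finset.sum_congr rfl fun i _ => ?_
        rw [hwv]
      · intro i _ hi hq0
        rw [hq0, hwv0] at hi
        simp at hi
    · intro i
      have := (Fintype.equivFin ι i).2
      omega
  have hprod : ∏ n ∈ S, (X - C (1 / ((4 * n : ℕ) : ℝ))) ^ (J - 14) ∣ W := by
    refine Finset.prod_dvd_of_coprime ?_ hdvd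
    intro n hn m hm hnm
    refine IsCoprime.pow (isCoprime_X_sub_C_of_isUnit_sub ?_)
    rw [isUnit_iff_ne_zero, sub_ne_zero]
    intro h0
    have hn0 : (n:ℝ) ≠ 0 := by have := hS n hn; positivity
    have hm0 : (m:ℝ) ≠ 0 := by have := hS m hm; positivity
    push_cast at h0
    field_simp at h0
    exact hnm (by exact_mod_cast h0.symm)
  have h3 := natDegree_le_of_dvd hprod hW
  rw [natDegree_prod_of_monic _ _ fun n _ => (monic_X_sub_C _).pow _] at h3
  simp only [natDegree_pow, natDegree_X_sub_C, mul_one, Finset.sum_const, smul_eq_mul] at h3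
  exact h3.trans hWdeg

/-! ### The numerical inequality -/

set_option maxHeartbeats 2000000 in
theorem numeric (N n lam k0 J : ℕ) (hL : 100 ≤ Real.log N) (hk : k0 = N / 4) (hkK : 1000 ≤ k0)
    (hlam : 1000 * lam ≤ k0) (hlam1 : 1 ≤ lam) (hJ : J * (100 * (2 * lam)) ≤ k0)
    (hB17 : (4 * (2 * lam) ^ 2) ^ 17 ≤ N) (hn1 : N ≤ n) (hn2 : n ≤ 2 * N) :
    ((4 * n : ℕ) : ℝ) ^ (k0 + J * (2 * lam)) * (n:ℝ) ^ lam *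
      (16 * (16 * (k0:ℝ) ^ 2 * (4 * ((2 * lam : ℕ):ℝ) ^ 2) ^ (8 * k0) * ((N:ℝ) ^ (2 * (2 * lam))) ^ J)) *
      (2 * √(n ! : ℝ) * ((4 * ((2 * lam : ℕ):ℝ) ^ 2) * (1 / ((4 * n : ℕ) : ℝ))) ^ (8 * k0 - J)
        + 1 / √(n ! : ℝ)) < 1 := by
  set L := Real.log N with hLdef
  have hN0 : 4000 ≤ N := by omega
  have hNpos : (0:ℝ) < N := by exact_mod_cast (by omega : 0 < N)
  have hNe : (N:ℝ) = Real.exp L := (Real.exp_log hNpos).symm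
  have hnpos : (0:ℝ) < n := by exact_mod_cast (by omega : 0 < n)
  have hn1r : (N:ℝ) ≤ n := by exact_mod_cast hn1
  have hn2r : (n:ℝ) ≤ 2 * N := by exact_mod_cast hn2
  set K : ℝ := (k0:ℝ) with hKdef
  have hK1000 : 1000 ≤ K := by rw [hKdef]; exact_mod_cast hkK
  have hKN : 4 * K ≤ N := by rw [hKdef]; exact_mod_cast (by omega : 4 * k0 ≤ N)
  have hKN' : (N:ℝ) ≤ 4 * K + 4 := by rw [hKdef]; exact_mod_cast (by omega : N ≤ 4 * k0 + 4)
  have hlamr : 1000 * (lam:ℝ) ≤ K := by rw [hKdef]; exact_mod_cast hlam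
  have hJr : (J:ℝ) * (100 * (2 * lam)) ≤ K := by rw [hKdef]; exact_mod_cast hJ
  have hlam0 : (1:ℝ) ≤ lam := by exact_mod_cast hlam1
  have hJK : 200 * (J:ℝ) ≤ K := by
    have : (0:ℝ) ≤ J := Nat.cast_nonneg _
    nlinarith
  have he2 : (2:ℝ) ≤ Real.exp 1 := by have := Real.add_one_le_exp (1:ℝ); linarith
  have he8 : (8:ℝ) ≤ Real.exp 3 := by
    have : Real.exp 3 = Real.exp 1 ^ 3 := by rw [← Real.exp_nat_mul]; norm_num
    rw [this]; nlinarith [mul_self_nonneg (Real.exp 1)]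
  have he16 : (16:ℝ) ≤ Real.exp 4 := by
    have : Real.exp 4 = Real.exp 1 * Real.exp 3 := by rw [← Real.exp_add]; norm_num
    rw [this]; nlinarith
  -- individual bounds
  have b1 : ((4 * n : ℕ) : ℝ) ^ (k0 + J * (2 * lam)) ≤ Real.exp ((K + K / 100) * (L + 3)) := by
    have h1 : ((4 * n : ℕ) : ℝ) ≤ Real.exp (L + 3) := by
      rw [Real.exp_add, ← hNe]; push_cast; nlinarith
    calc _ ≤ (Real.exp (L + 3)) ^ (k0 + J * (2 * lam)) := by gcongr
      _ = Real.exp (((k0 + J * (2 * lam) : ℕ):ℝ) * (L + 3)) := by rw [← Real.exp_nat_mul]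
      _ ≤ _ := by
        rw [Real.exp_le_exp]
        have : ((k0 + J * (2 * lam) : ℕ):ℝ) ≤ K + K / 100 := by push_cast; linarith
        gcongr
  have hn' : (n:ℝ) ≤ Real.exp (L + 1) := by
    rw [Real.exp_add, ← hNe]; nlinarith
  have b2 : (n:ℝ) ^ lam ≤ Real.exp (lam * (L + 1)) := by
    rw [Real.exp_nat_mul]; gcongr
  have hB : (4 * ((2 * lam : ℕ):ℝ) ^ 2) ≤ Real.exp (L / 17) := by
    have h1 : (4 * ((2 * lam : ℕ):ℝ) ^ 2) ^ 17 ≤ (Real.exp (L / 17)) ^ 17 := by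
      rw [← Real.exp_nat_mul]
      have : ((17:ℕ):ℝ) * (L / 17) = L := by push_cast; ring
      rw [this, ← hNe]
      exact_mod_cast hB17
    exact le_of_pow_le_pow_left₀ (by norm_num) (Real.exp_pos _).le h1
  have b3 : 16 * (16 * K ^ 2 * (4 * ((2 * lam : ℕ):ℝ) ^ 2) ^ (8 * k0) * ((N:ℝ) ^ (2 * (2 * lam))) ^ J)
      ≤ Real.exp (2 * L + 4 + 8 * K * (L / 17) + K / 50 * L) := by
    have h1 : 256 * K ^ 2 ≤ Real.exp (2 * L + 4) := by
      have : Real.exp (2 * L + 4) = Real.exp L ^ 2 * Real.exp 4 := by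
        rw [Real.exp_add, ← Real.exp_nat_mul]; norm_num
      rw [this, ← hNe]
      have h2 : 16 * K ^ 2 ≤ (N:ℝ) ^ 2 := by nlinarith
      have : (0:ℝ) ≤ (N:ℝ)^2 := by positivity
      nlinarith
    have h2 : (4 * ((2 * lam : ℕ):ℝ) ^ 2) ^ (8 * k0) ≤ Real.exp (8 * K * (L / 17)) := by
      have : Real.exp (8 * K * (L / 17)) = Real.exp (L / 17) ^ (8 * k0) := by
        rw [← Real.exp_nat_mul]; push_cast; rfl
      rw [this]; gcongr
    have h3 : ((N:ℝ) ^ (2 * (2 * lam))) ^ J ≤ Real.exp (K / 50 * L) := by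
      rw [← pow_mul, hNe, ← Real.exp_nat_mul, Real.exp_le_exp]
      have : ((2 * (2 * lam) * J : ℕ) : ℝ) ≤ K / 50 := by push_cast; linarith
      gcongr
    rw [Real.exp_add, Real.exp_add]
    calc _ = (256 * K ^ 2) * (4 * ((2 * lam : ℕ):ℝ) ^ 2) ^ (8 * k0) * ((N:ℝ) ^ (2 * (2 * lam))) ^ J := by ring
      _ ≤ _ := by gcongr
  have hfac0 : (0:ℝ) < n ! := by exact_mod_cast Nat.factorial_pos n
  have b4 : 1 / √(n ! : ℝ) ≤ Real.exp (- (2 * K * (L - 1))) := by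
    rw [Real.exp_neg, ← one_div]
    refine one_div_le_one_div_of_le (Real.exp_pos _) ?_
    apply Real.le_sqrt_of_sq_le
    have h1 : (n:ℝ) ^ n / n ! ≤ Real.exp n := Real.pow_div_factorial_le_exp n hnpos.le n
    rw [div_le_iff₀ hfac0] at h1
    have h2 : Real.exp (n * L) ≤ (n:ℝ) ^ n := by
      rw [Real.exp_nat_mul, ← hNe]; gcongr
    have h3 : Real.exp (n * (L - 1)) ≤ n ! := by
      have : Real.exp (n * L) = Real.exp n * Real.exp (n * (L - 1)) := by rw [← Real.exp_add]; ring_nf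
      rw [this] at h2
      exact le_of_mul_le_mul_left (h2.trans h1) (Real.exp_pos _)
    refine le_trans ?_ h3
    rw [← Real.exp_nat_mul, Real.exp_le_exp]
    push_cast
    have : 4 * K ≤ n := by linarith
    have h5 := mul_le_mul_of_nonneg_right this (by linarith : (0:ℝ) ≤ L - 1)
    linarith
  have b5 : √(n ! : ℝ) ≤ Real.exp ((4 * K + 4) * (L + 1)) := by
    rw [Real.sqrt_le_left (Real.exp_pos _).le, ← Real.exp_nat_mul]
    have h1 : (n ! : ℝ) ≤ (n:ℝ) ^ n := by exact_mod_cast Nat.factorial_le_pow n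
    refine h1.trans ?_
    calc (n:ℝ) ^ n ≤ Real.exp (L + 1) ^ n := by gcongr
      _ = Real.exp (n * (L + 1)) := by rw [← Real.exp_nat_mul]
      _ ≤ _ := by
        rw [Real.exp_le_exp]
        push_cast
        have : (n:ℝ) ≤ 2 * (4 * K + 4) := by linarith
        rw [← mul_assoc]
        exact mul_le_mul_of_nonneg_right this (by linarith)
  have b6 : ((4 * ((2 * lam : ℕ):ℝ) ^ 2) * (1 / ((4 * n : ℕ) : ℝ))) ^ (8 * k0 - J) ≤
      Real.exp (- (16 / 17 * L) * (8 * K - K / 100)) := by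
    have h1 : (4 * ((2 * lam : ℕ):ℝ) ^ 2) * (1 / ((4 * n : ℕ) : ℝ)) ≤ Real.exp (- (16 / 17 * L)) := by
      have h2 : 1 / ((4 * n : ℕ) : ℝ) ≤ Real.exp (- L) := by
        rw [Real.exp_neg, ← one_div]
        refine one_div_le_one_div_of_le (Real.exp_pos _) ?_
        rw [← hNe]; push_cast; linarith
      calc _ ≤ Real.exp (L / 17) * Real.exp (- L) := by gcongr
        _ = _ := by rw [← Real.exp_add]; ring_nf
    calc _ ≤ (Real.exp (- (16 / 17 * L))) ^ (8 * k0 - J) := by gcongr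
      _ = Real.exp ((8 * k0 - J : ℕ) * (- (16 / 17 * L))) := by rw [← Real.exp_nat_mul]
      _ ≤ _ := by
        rw [Real.exp_le_exp]
        have hJk : J ≤ 8 * k0 := by
          have : (J:ℝ) ≤ 8 * k0 := by linarith
          exact_mod_cast this
        rw [Nat.cast_sub hJk]
        push_cast
        have : 8 * K - K / 100 ≤ 8 * k0 - J := by linarith
        have h5 := mul_le_mul_of_nonneg_right this (by linarith : (0:ℝ) ≤ 16 / 17 * L)
        linarith
  have hP1 : 100 * K ≤ K * L := by nlinarith
  have hP2 : 1000 * L ≤ K * L := by nlinarith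
  have hP3 : 1000 * ((lam:ℝ) * L) ≤ K * L := by nlinarith
  have hexp2 : Real.exp (-2) ≤ 1 / 4 := by
    rw [Real.exp_neg, ← one_div]
    refine one_div_le_one_div_of_le (by norm_num) ?_
    have : Real.exp 2 = Real.exp 1 * Real.exp 1 := by rw [← Real.exp_add]; norm_num
    rw [this]; nlinarith
  set Z := ((4 * n : ℕ) : ℝ) ^ (k0 + J * (2 * lam)) * (n:ℝ) ^ lam *
      (16 * (16 * K ^ 2 * (4 * ((2 * lam : ℕ):ℝ) ^ 2) ^ (8 * k0) * ((N:ℝ) ^ (2 * (2 * lam))) ^ J)) with hZ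
  have hZ0 : 0 ≤ Z := by positivity
  have hZb : Z ≤ Real.exp ((K + K / 100) * (L + 3) + lam * (L + 1) +
      (2 * L + 4 + 8 * K * (L / 17) + K / 50 * L)) := by
    rw [Real.exp_add, Real.exp_add, hZ]
    gcongr
  have t1 : Z * (1 / √(n ! : ℝ)) ≤ 1 / 4 := by
    refine le_trans (mul_le_mul hZb b4 (by positivity) (Real.exp_pos _).le) (le_trans ?_ hexp2)
    rw [← Real.exp_add, Real.exp_le_exp]
    linarith
  have t2 : Z * (2 * √(n ! : ℝ) * ((4 * ((2 * lam : ℕ):ℝ) ^ 2) * (1 / ((4 * n : ℕ) : ℝ))) ^ (8 * k0 - J)) ≤ 1 / 4 := by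
    have h1 : 2 * √(n ! : ℝ) * ((4 * ((2 * lam : ℕ):ℝ) ^ 2) * (1 / ((4 * n : ℕ) : ℝ))) ^ (8 * k0 - J) ≤
        Real.exp 1 * Real.exp ((4 * K + 4) * (L + 1)) * Real.exp (- (16 / 17 * L) * (8 * K - K / 100)) := by
      gcongr
    refine le_trans (mul_le_mul hZb h1 (by positivity) (Real.exp_pos _).le) (le_trans ?_ hexp2)
    rw [← Real.exp_add, ← Real.exp_add, ← Real.exp_add, Real.exp_le_exp]
    linarith
  rw [mul_add]
  linarith

theorem propA (N lam : ℕ) (hL : 100 ≤ Real.log N) (hlam1 : 1 ≤ lam)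
    (hB17 : (4 * (2 * lam) ^ 2) ^ 17 ≤ N) (g : Fin 16 → ℕ) (hg : ∀ i, g i ≤ lam)
    (hinj : Function.Injective g) (S : Finset ℕ)
    (hS : ∀ n ∈ S, N ≤ n ∧ n ≤ 2 * N ∧ ∀ i, ∃ x : ℕ, (n + 2 * g i)! + 1 = x ^ 2) :
    S.card ≤ 6800 * lam := by
  have hNbig : 16 ^ 17 * lam ≤ N := by
    calc 16 ^ 17 * lam ≤ 16 ^ 17 * lam ^ 34 := by
          gcongr
          exact Nat.le_self_pow (by norm_num) lam
      _ = (4 * (2 * lam) ^ 2) ^ 17 := by ring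
      _ ≤ N := hB17
  obtain ⟨h, hh⟩ : ∃ h, h = 2 * lam := ⟨_, rfl⟩
  obtain ⟨k0, hk0⟩ : ∃ k0, k0 = N / 4 := ⟨_, rfl⟩
  obtain ⟨J, hJd⟩ : ∃ J, J = k0 / (100 * h) := ⟨_, rfl⟩
  have hk1 : 6000 * lam ≤ k0 := by omega
  have hkbig : 10000 * lam ≤ k0 := by omega
  have hJ1 : J * (100 * h) ≤ k0 := by rw [hJd]; exact Nat.div_mul_le_self _ _
  have hJ2 : k0 < (J + 1) * (100 * h) := by
    rw [hJd, mul_comm]; exact Nat.lt_mul_div_succ _ (by omega)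
  have hJ29 : 29 ≤ J := by
    rw [hJd, Nat.le_div_iff_mul_le (by omega)]; omega
  -- square root series
  have hFex : ∀ i, ∃ F : PowerSeries ℤ, F ^ 2 = ((PiP ℤ (2 * g i) : Polynomial ℤ) : PowerSeries ℤ) ∧
      PowerSeries.coeff 0 F = 1 ∧ ∀ m, |((PowerSeries.coeff m F : ℤ) : ℝ)| ≤ (4 * (h:ℝ) ^ 2) ^ m := by
    intro i
    obtain ⟨F, h1, h2, h3⟩ := exists_F (2 * g i)
    refine ⟨F, h1, h2, fun m => ?_⟩
    have h4 : |((PowerSeries.coeff m F : ℤ) : ℝ)| ≤ (4 * ((2 * g i : ℕ) : ℝ) ^ 2) ^ m := by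
      exact_mod_cast h3 m
    refine h4.trans ?_
    have : 2 * g i ≤ h := by have := hg i; omega
    gcongr
  choose F hF hF0 hFc using hFex
  have hB1 : (1:ℝ) ≤ 4 * (h:ℝ) ^ 2 := by
    have : (1:ℝ) ≤ h := by exact_mod_cast (by omega : 1 ≤ h)
    nlinarith
  obtain ⟨q, hq0, hqdeg, hqL, hqX⟩ := siegel F (4 * (h:ℝ) ^ 2) hB1 hFc k0 (by omega)
  have he : ∀ i, 2 * g i ≤ h := fun i => by have := hg i; omega
  have hvan := vanish h (fun i => 2 * g i) he F hF hF0 q (8 * k0) hqX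
  -- choose the square roots
  have hxex : ∀ n, ∃ x : Fin 16 → ℕ, n ∈ S → ∀ i, (n + 2 * g i)! + 1 = x i ^ 2 := by
    intro n
    by_cases hn : n ∈ S
    · choose x hx using (hS n hn).2.2
      exact ⟨x, fun _ => hx⟩
    · exact ⟨fun _ => 0, fun h => absurd h hn⟩
  choose x hx using hxex
  have hN1 : (1:ℝ) ≤ N := by exact_mod_cast (by omega : 1 ≤ N)
  have hΓ1 : (1:ℝ) ≤ (N:ℝ) ^ (2 * h) := one_le_pow₀ hN1
  have hΓ : ((k0 + J * h : ℕ) + 2 * (h:ℝ) ^ 2) * (5 * h) ^ h ≤ (N:ℝ) ^ (2 * h) := by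
    have hlam2 : 16 ^ 17 * lam ^ 2 ≤ N := by
      calc 16 ^ 17 * lam ^ 2 ≤ 16 ^ 17 * lam ^ 34 := by
                  exact Nat.mul_le_mul_left _ (Nat.pow_le_pow_right hlam1 (by norm_num))
        _ = (4 * (2 * lam) ^ 2) ^ 17 := by ring
        _ ≤ N := hB17
    have h1 : (k0 + J * h) + 2 * h ^ 2 ≤ N := by
      have : J * h ≤ k0 := by nlinarith
      have : 2 * h ^ 2 = 8 * lam ^ 2 := by rw [hh]; ring
      omega
    have h1' : ((k0 + J * h : ℕ) + 2 * (h:ℝ) ^ 2) ≤ N := by exact_mod_cast h1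
    have h2 : (5 * (h:ℝ)) ≤ N := by exact_mod_cast (by omega : 5 * h ≤ N)
    calc _ ≤ (N:ℝ) * (N:ℝ) ^ h := by gcongr
      _ = (N:ℝ) ^ (h + 1) := by ring
      _ ≤ _ := pow_le_pow_right₀ hN1 (by omega)
  have hmain := detcount S (fun n hn => by have := (hS n hn).1; omega) h k0 J (by omega)
    (fun i => 2 * g i) he (fun a b hab => hinj (by simpa using hab)) q hq0 hqdeg
    (fun n i => (n:ℝ) ^ (lam - g i) * x n i) (fun n hn i => by
      have h1 : n ≠ 0 := by have := (hS n hn).1; omega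
      have h2 : x n i ≠ 0 := by
        intro h0
        have := hx n hn i
        rw [h0] at this
        simp at this
      positivity)
    (fun n hn j hj => by
      obtain ⟨hn1, hn2, -⟩ := hS n hn
      refine core lam n (k0 + J * h) (8 * k0 - J) g (x n) hg (by omega) (hx n hn) _ (fun i => ?_)
        (16 * (k0:ℝ) ^ 2 * (4 * (h:ℝ) ^ 2) ^ (8 * k0) * ((N:ℝ) ^ (2 * h)) ^ J) (fun i => ?_) F
        (4 * (h:ℝ) ^ 2) hB1 hF hF0 hFc ?_ ?_ ?_
      · refine (natDegree_wv ℤ h _ _ k0 (hqdeg i) j).trans ?_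
        gcongr
      · refine (L1_wv h _ (he i) (q i) k0 J (hqdeg i) _ (hqL i) _ hΓ j hj).trans ?_
        gcongr
      · have h1 : 8 * (4 * h ^ 2) ≤ 4 * n := by
          have : (4 * h ^ 2) ≤ (4 * (2 * lam) ^ 2) ^ 17 := by
            rw [hh]; exact Nat.le_self_pow (by norm_num) _
          have h3 : 16 ^ 17 * lam ^ 2 ≤ (4 * (2 * lam) ^ 2) ^ 17 := by
            calc 16 ^ 17 * lam ^ 2 ≤ 16 ^ 17 * lam ^ 34 := by
                  exact Nat.mul_le_mul_left _ (Nat.pow_le_pow_right hlam1 (by norm_num))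
              _ = (4 * (2 * lam) ^ 2) ^ 17 := by ring
          have : 4 * h ^ 2 = 16 * lam ^ 2 := by rw [hh]; ring
          omega
        have h2 : 8 * (4 * (h:ℝ) ^ 2) ≤ ((4 * n : ℕ) : ℝ) := by exact_mod_cast h1
        have h3 : (0:ℝ) < ((4 * n : ℕ) : ℝ) := by exact_mod_cast (by omega : 0 < 4 * n)
        rw [mul_one_div, div_le_div_iff₀ h3 (by norm_num)]
        linarith
      · exact (pow_dvd_pow _ (by omega)).trans (hvan j)
      · have := numeric N n lam k0 J hL hk0 (by omega) (by omega) hlam1 (by rw [← hh]; exact hJ1) hB17 hn1 hn2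
        rw [← hh] at this
        exact this)
  -- conclude
  have h1 : 16 * (k0 + 16 * h) ≤ 17 * k0 := by omega
  have h2 : S.card * (J - 14) ≤ (6800 * lam) * (J - 14) := by
    refine (hmain.trans h1).trans ?_
    have h3 : J + 1 ≤ 2 * (J - 14) := by omega
    calc 17 * k0 ≤ 17 * ((J + 1) * (100 * h)) := by gcongr
      _ ≤ 17 * ((2 * (J - 14)) * (100 * h)) := by gcongr
      _ = _ := by rw [hh]; ring
  exact Nat.le_of_mul_le_mul_right h2 (by omega)

/-! ### Counting -/

def sol (n : ℕ) : Prop := ∃ x : ℕ, n ! + 1 = x ^ 2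

def bse (lam n : ℕ) : ℕ := 2 * lam * ((n / 2) / lam) + n % 2

theorem bse_eq (lam n : ℕ) : bse lam n + 2 * ((n / 2) % lam) = n := by
  unfold bse
  have h1 := Nat.div_add_mod (n / 2) lam
  have h2 := Nat.div_add_mod n 2
  rw [mul_assoc]
  omega

noncomputable def Aset (lam β : ℕ) : Finset ℕ := (Finset.range lam).filter fun g => sol (β + 2 * g)

theorem Aset_card (lam β : ℕ) : (Aset lam β).card ≤ lam := by
  have := Finset.card_filter_le (Finset.range lam) fun g => sol (β + 2 * g)
  rw [Finset.card_range] at this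
  exact this

theorem fiber_card (lam β : ℕ) (hlam : 1 ≤ lam) (T : Finset ℕ) (hT : ∀ n ∈ T, sol n) :
    (T.filter fun n => bse lam n = β).card ≤ (Aset lam β).card := by
  refine Finset.card_le_card_of_injOn (fun n => (n / 2) % lam) ?_ ?_
  · intro n hn
    rw [Finset.mem_coe, Finset.mem_filter] at hn
    rw [Finset.mem_coe, Aset, Finset.mem_filter, Finset.mem_range, ← hn.2, bse_eq]
    exact ⟨Nat.mod_lt _ (by omega), hT n hn.1⟩
  · intro n hn m hm hnm
    rw [Finset.mem_coe, Finset.mem_filter] at hn hm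
    have h1 := bse_eq lam n
    have h2 := bse_eq lam m
    simp only at hnm
    rw [hn.2] at h1
    rw [hm.2] at h2
    omega

theorem heavy_card (N lam : ℕ) (hL : 100 ≤ Real.log N) (hlam1 : 1 ≤ lam)
    (hB17 : (4 * (2 * lam) ^ 2) ^ 17 ≤ N) :
    ((Finset.Icc N (2 * N)).filter fun β => 16 ≤ (Aset lam β).card).card ≤ 6800 * lam * lam ^ 16 := by
  set Hv := (Finset.Icc N (2 * N)).filter fun β => 16 ≤ (Aset lam β).card with hHv
  have hex : ∀ β, ∃ g : Fin 16 → Fin lam, β ∈ Hv → Function.Injective g ∧ ∀ i, sol (β + 2 * (g i : ℕ)) := by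
    intro β
    by_cases hβ : β ∈ Hv
    · have hc := (Finset.mem_filter.mp hβ).2
      have hmem := fun i => Finset.orderEmbOfCardLe_mem (Aset lam β) hc i
      have hmem' : ∀ i, (Aset lam β).orderEmbOfCardLe hc i < lam ∧
          sol (β + 2 * (Aset lam β).orderEmbOfCardLe hc i) := by
        intro i
        have := Finset.mem_filter.mp (hmem i)
        exact ⟨Finset.mem_range.mp this.1, this.2⟩
      refine ⟨fun i => ⟨(Aset lam β).orderEmbOfCardLe hc i, (hmem' i).1⟩, fun _ => ⟨?_, fun i => (hmem' i).2⟩⟩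
      intro a b hab
      exact ((Aset lam β).orderEmbOfCardLe hc).injective (Fin.mk.inj hab)
    · exact ⟨fun _ => ⟨0, hlam1⟩, fun h => absurd h hβ⟩
  choose g hg using hex
  have h1 := Finset.card_le_mul_card_image_of_maps_to (f := g) (s := Hv) (t := Finset.univ)
    (fun _ _ => Finset.mem_univ _) (6800 * lam) ?_
  · simpa using h1
  · intro γ _
    by_cases hne : ∃ β ∈ Hv, g β = γ
    · obtain ⟨β0, hβ0, hγ⟩ := hne
      refine propA N lam hL hlam1 hB17 (fun i => (γ i : ℕ)) (fun i => (γ i).2.le) ?_ _ ?_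
      · intro a b hab
        rw [← hγ] at hab
        exact (hg β0 hβ0).1 (Fin.ext hab)
      · intro n hn
        rw [Finset.mem_filter] at hn
        have h2 := Finset.mem_Icc.mp (Finset.mem_filter.mp hn.1).1
        refine ⟨h2.1, h2.2, fun i => ?_⟩
        have := (hg n hn.1).2 i
        rw [hn.2] at this
        exact this
    · push Not at hne
      rw [Finset.filter_eq_empty_iff.mpr hne]
      simp

theorem dyadic (N lam : ℕ) (hL : 100 ≤ Real.log N) (hlam1 : 1 ≤ lam)
    (hB17 : (4 * (2 * lam) ^ 2) ^ 17 ≤ N) :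
    ((Finset.Ioc N (2 * N)).filter sol).card ≤
      lam * (2 * lam) + 15 * (2 * (N / lam + 1)) + lam * (6800 * lam * lam ^ 16) := by
  set T := (Finset.Ioc N (2 * N)).filter sol with hTdef
  have hT : ∀ n ∈ T, N < n ∧ n ≤ 2 * N ∧ sol n := by
    intro n hn
    rw [hTdef, Finset.mem_filter, Finset.mem_Ioc] at hn
    exact ⟨hn.1.1, hn.1.2, hn.2⟩
  set T1 := T.filter fun n => bse lam n < N
  set T2 := T.filter fun n => (Aset lam (bse lam n)).card < 16
  set T3 := T.filter fun n => N ≤ bse lam n ∧ 16 ≤ (Aset lam (bse lam n)).card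
  have hcov : T ⊆ (T1 ∪ T2) ∪ T3 := by
    intro n hn
    simp only [T1, T2, T3, Finset.mem_union, Finset.mem_filter, hn, true_and]
    omega
  have hmod : ∀ n, (n / 2) % lam < lam := fun n => Nat.mod_lt _ (by omega)
  have c1 : T1.card ≤ lam * (2 * lam) := by
    have h1 := Finset.card_le_mul_card_image_of_maps_to (f := bse lam) (s := T1) (t := Finset.Ico (N - 2 * lam) N)
      (fun n hn => ?_) lam (fun β _ => ?_)
    · refine h1.trans ?_
      rw [Nat.card_Ico]
      gcongr
      omega
    · have h2 := Finset.mem_filter.mp hn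
      have h3 := hT n h2.1
      have h4 := bse_eq lam n
      have h5 := hmod n
      rw [Finset.mem_Ico]
      omega
    · exact (fiber_card lam β hlam1 T1 fun n hn => (hT n (Finset.mem_filter.mp hn).1).2.2).trans (Aset_card _ _)
  have c2 : T2.card ≤ 15 * (2 * (N / lam + 1)) := by
    have h1 := Finset.card_le_mul_card_image_of_maps_to (f := bse lam) (s := T2)
      (t := ((Finset.range (N / lam + 1)) ×ˢ (Finset.range 2)).image fun z => 2 * lam * z.1 + z.2)
      (fun n hn => ?_) 15 (fun β hβ => ?_)
    · refine h1.trans ?_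
      gcongr
      refine Finset.card_image_le.trans ?_
      rw [Finset.card_product]
      simp [mul_comm]
    · have h3 := hT n (Finset.mem_filter.mp hn).1
      rw [Finset.mem_image]
      refine ⟨(n / 2 / lam, n % 2), ?_, rfl⟩
      rw [Finset.mem_product, Finset.mem_range, Finset.mem_range]
      refine ⟨?_, Nat.mod_lt _ (by norm_num)⟩
      have : n / 2 / lam ≤ N / lam := Nat.div_le_div_right (by omega)
      simp only
      omega
    · by_cases hne : ∃ n ∈ T2, bse lam n = β
      · obtain ⟨n, hn, hnβ⟩ := hne
        have h4 := (Finset.mem_filter.mp hn).2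
        rw [hnβ] at h4
        exact (fiber_card lam β hlam1 T2 fun n hn => (hT n (Finset.mem_filter.mp hn).1).2.2).trans (by omega)
      · push Not at hne
        rw [Finset.filter_eq_empty_iff.mpr hne]
        simp
  have c3 : T3.card ≤ lam * (6800 * lam * lam ^ 16) := by
    have h1 := Finset.card_le_mul_card_image_of_maps_to (f := bse lam) (s := T3)
      (t := (Finset.Icc N (2 * N)).filter fun β => 16 ≤ (Aset lam β).card)
      (fun n hn => ?_) lam (fun β _ => ?_)
    · exact h1.trans (Nat.mul_le_mul_left _ (heavy_card N lam hL hlam1 hB17))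
    · have h2 := Finset.mem_filter.mp hn
      have h3 := hT n h2.1
      have h4 := bse_eq lam n
      rw [Finset.mem_filter, Finset.mem_Icc]
      refine ⟨⟨h2.2.1, by omega⟩, h2.2.2⟩
    · exact (fiber_card lam β hlam1 T3 fun n hn => (hT n (Finset.mem_filter.mp hn).1).2.2).trans (Aset_card _ _)
  calc T.card ≤ ((T1 ∪ T2) ∪ T3).card := Finset.card_le_card hcov
    _ ≤ (T1 ∪ T2).card + T3.card := Finset.card_union_le _ _
    _ ≤ T1.card + T2.card + T3.card := by gcongr; exact Finset.card_union_le _ _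
    _ ≤ _ := by gcongr

theorem dyadic_real (N : ℕ) (hL : 100 ≤ Real.log N) (hN : 4 ^ 34 ≤ N) :
    (((Finset.Ioc N (2 * N)).filter sol).card : ℝ) ≤ 7100 * (N:ℝ) ^ ((33:ℝ) / 34) := by
  have hNpos : (0:ℝ) ≤ N := Nat.cast_nonneg _
  set y : ℝ := (N:ℝ) ^ ((1:ℝ) / 34) with hy
  have hy34 : y ^ 34 = N := by
    rw [hy, ← Real.rpow_natCast, ← Real.rpow_mul hNpos]; norm_num
  have hy33 : (N:ℝ) ^ ((33:ℝ) / 34) = y ^ 33 := by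
    rw [hy, ← Real.rpow_natCast, ← Real.rpow_mul hNpos]; norm_num
  have hy0 : 0 ≤ y := Real.rpow_nonneg hNpos _
  have hy4 : 4 ≤ y := by
    refine le_of_pow_le_pow_left₀ (n := 34) (by norm_num) hy0 ?_
    rw [hy34]; exact_mod_cast hN
  set lam := ⌊y / 4⌋₊ with hlam
  have hl1 : (lam:ℝ) ≤ y / 4 := Nat.floor_le (by positivity)
  have hl2 : y / 4 < lam + 1 := Nat.lt_floor_add_one _
  have hlam1 : 1 ≤ lam := by
    rw [hlam, Nat.one_le_floor_iff]; linarith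
  have hlr : (1:ℝ) ≤ lam := by exact_mod_cast hlam1
  have hl3 : y / 8 ≤ lam := by linarith
  have hB17 : (4 * (2 * lam) ^ 2) ^ 17 ≤ N := by
    have : ((4 * (lam:ℝ)) ^ 34) ≤ N := by
      rw [← hy34]; gcongr; linarith
    have h2 : (4 * lam) ^ 34 ≤ N := by exact_mod_cast this
    calc _ = (4 * lam) ^ 34 := by ring
      _ ≤ N := h2
  have h1 := dyadic N lam hL hlam1 hB17
  have h2 : (((Finset.Ioc N (2 * N)).filter sol).card : ℝ) ≤
      lam * (2 * lam) + 15 * (2 * (N / lam + 1)) + lam * (6800 * lam * lam ^ 16) := by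
    have h3 : (((Finset.Ioc N (2 * N)).filter sol).card : ℝ) ≤
      lam * (2 * lam) + 15 * (2 * ((N / lam : ℕ) + 1)) + lam * (6800 * lam * lam ^ 16) := by exact_mod_cast h1
    have h4 : ((N / lam : ℕ) : ℝ) ≤ N / lam := Nat.cast_div_le
    linarith
  rw [hy33]
  refine h2.trans ?_
  have hy1 : 1 ≤ y := by linarith
  have hly : (lam:ℝ) ≤ y := by linarith
  have a1 : (lam:ℝ) * (2 * lam) ≤ 2 * y ^ 33 := by
    calc (lam:ℝ) * (2 * lam) = 2 * lam ^ 2 := by ring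
      _ ≤ 2 * y ^ 2 := by gcongr
      _ ≤ 2 * y ^ 33 := by gcongr; norm_num
  have a2 : (N:ℝ) / lam ≤ 8 * y ^ 33 := by
    rw [div_le_iff₀ (by linarith), ← hy34]
    calc y ^ 34 = 8 * y ^ 33 * (y / 8) := by ring
      _ ≤ _ := by gcongr
  have a3 : (lam:ℝ) * (6800 * lam * lam ^ 16) ≤ 6800 * y ^ 33 := by
    calc (lam:ℝ) * (6800 * lam * lam ^ 16) = 6800 * lam ^ 18 := by ring
      _ ≤ 6800 * y ^ 18 := by gcongr
      _ ≤ 6800 * y ^ 33 := by gcongr; norm_num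
  have a4 : 1 ≤ y ^ 33 := one_le_pow₀ hy1
  linarith

theorem main : ∃ C : ℝ, 0 < C ∧ ∀ M : ℕ, 0 < M →
    (((Finset.Icc 1 M).filter sol).card : ℝ) ≤ C * (M:ℝ) ^ ((33:ℝ) / 34) := by
  obtain ⟨N0, hN0⟩ : ∃ N0 : ℕ, N0 = ⌈Real.exp 100⌉₊ + 4 ^ 34 := ⟨_, rfl⟩
  refine ⟨2 * N0 + 21300, by positivity, ?_⟩
  intro M
  induction M using Nat.strong_induction_on with
  | _ M ih =>
    intro hM
    have hM1 : (1:ℝ) ≤ M := by exact_mod_cast hM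
    by_cases hsmall : M ≤ 2 * N0
    · have h1 : (((Finset.Icc 1 M).filter sol).card : ℝ) ≤ M := by
        have := Finset.card_filter_le (Finset.Icc 1 M) sol
        rw [Nat.card_Icc, Nat.add_sub_cancel] at this
        exact_mod_cast this
      have h2 : (1:ℝ) ≤ (M:ℝ) ^ ((33:ℝ) / 34) := Real.one_le_rpow hM1 (by norm_num)
      have h3 : (M:ℝ) ≤ 2 * N0 := by exact_mod_cast hsmall
      have h4 : (0:ℝ) ≤ N0 := Nat.cast_nonneg _
      clear hN0 ih
      nlinarith
    · push Not at hsmall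
      obtain ⟨N, hN⟩ : ∃ N, N = (M + 1) / 2 := ⟨_, rfl⟩
      have hNN0 : N0 ≤ N := by omega
      have h434 : 4 ^ 34 ≤ N0 := by omega
      have hNexp : Real.exp 100 ≤ N := by
        have h1 : Real.exp 100 ≤ (⌈Real.exp 100⌉₊ : ℕ) := Nat.le_ceil _
        have h2 : ((⌈Real.exp 100⌉₊ : ℕ) : ℝ) ≤ N := by exact_mod_cast (by omega)
        linarith
      have hNpos : (0:ℝ) < N := lt_of_lt_of_le (Real.exp_pos _) hNexp
      have hL : 100 ≤ Real.log N := by rwa [Real.le_log_iff_exp_le hNpos]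
      have hd := dyadic_real N hL (by omega)
      have hi := ih N (by omega) (by omega)
      have hsub : (Finset.Icc 1 M).filter sol ⊆
          (Finset.Icc 1 N).filter sol ∪ (Finset.Ioc N (2 * N)).filter sol := by
        intro n hn
        simp only [Finset.mem_union, Finset.mem_filter, Finset.mem_Icc, Finset.mem_Ioc] at hn ⊢
        rcases le_or_gt n N with h | h
        · exact Or.inl ⟨⟨hn.1.1, h⟩, hn.2⟩
        · exact Or.inr ⟨⟨h, by omega⟩, hn.2⟩
      have hcard : (((Finset.Icc 1 M).filter sol).card : ℝ) ≤
          ((Finset.Icc 1 N).filter sol).card + ((Finset.Ioc N (2 * N)).filter sol).card := by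
        exact_mod_cast (Finset.card_le_card hsub).trans (Finset.card_union_le _ _)
      have hNM : (N:ℝ) ≤ 9 / 16 * M := by
        have : 16 * N ≤ 9 * M := by omega
        have : 16 * (N:ℝ) ≤ 9 * M := by exact_mod_cast this
        linarith
      have hpow : (N:ℝ) ^ ((33:ℝ) / 34) ≤ 3 / 4 * (M:ℝ) ^ ((33:ℝ) / 34) := by
        calc (N:ℝ) ^ ((33:ℝ) / 34) ≤ (9 / 16 * (M:ℝ)) ^ ((33:ℝ) / 34) := by gcongr
          _ = (9 / 16) ^ ((33:ℝ) / 34) * (M:ℝ) ^ ((33:ℝ) / 34) :=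
            Real.mul_rpow (by norm_num) (by linarith)
          _ ≤ _ := by
            gcongr
            calc (9 / 16 : ℝ) ^ ((33:ℝ) / 34) ≤ (9 / 16 : ℝ) ^ ((1:ℝ) / 2) :=
                  Real.rpow_le_rpow_of_exponent_ge (by norm_num) (by norm_num) (by norm_num)
              _ = 3 / 4 := by
                rw [← Real.sqrt_eq_rpow, show (9 / 16 : ℝ) = (3 / 4) ^ 2 by norm_num,
                  Real.sqrt_sq (by norm_num)]
      have hN0r : (0:ℝ) ≤ N0 := Nat.cast_nonneg _
      have hMp : 0 ≤ (M:ℝ) ^ ((33:ℝ) / 34) := Real.rpow_nonneg (by linarith) _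
      calc _ ≤ (2 * N0 + 21300 + 7100) * (N:ℝ) ^ ((33:ℝ) / 34) := by linarith
        _ ≤ (2 * N0 + 21300 + 7100) * (3 / 4 * (M:ℝ) ^ ((33:ℝ) / 34)) := by gcongr
        _ ≤ _ := by
          clear hN0 ih h434
          have := mul_nonneg hN0r hMp
          linarith

end BR

/-- **Power saving bound for the Brocard–Ramanujan problem.**
There exists a positive constant `C` such that for all positive integers `N`, the number of
positive integers `n ≤ N` for which there exists an integer `x` with `n! + 1 = x^2` is at most
`C·N^(33/34)`. -/
theorem brocard_ramanujan_power_saving :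
    ∃ C : ℝ, 0 < C ∧ ∀ N : ℕ, 0 < N →
      (((Finset.Icc 1 N).filter
          (fun n => ∃ x : ℤ, (n ! : ℤ) + 1 = x ^ 2)).card : ℝ)
        ≤ C * (N : ℝ) ^ ((33 : ℝ) / 34) := by
  obtain ⟨C, hC, h⟩ := BR.main
  refine ⟨C, hC, fun N hN => ?_⟩
  have heq : (Finset.Icc 1 N).filter (fun n => ∃ x : ℤ, (n ! : ℤ) + 1 = x ^ 2) =
      (Finset.Icc 1 N).filter BR.sol := by
    refine Finset.filter_congr fun n _ => ?_
    constructor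
    · rintro ⟨x, hx⟩
      refine ⟨x.natAbs, ?_⟩
      zify
      rw [sq_abs]
      exact_mod_cast hx
    · rintro ⟨x, hx⟩
      exact ⟨x, by exact_mod_cast hx⟩
  rw [heq]
  exact h N hN
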